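/- For every n ≥ 1, the coefficient of x^{n-1} in the matrix-valued polynomial Q_n(x) = P_n(x)·Γ_n^{-1} is the matrix Q^n_{n-1} whose only nonzero entries are (Q^n_{n-1})_{j,j+1} = -(q/2)·(1-q^{2n})(1-q^{2j+2}) / ((1-q²)(1-q^{2n+2j+2})) for 0 ≤ j ≤ 2ℓ-1 and (Q^n_{n-1})_{j,j-1} = -(q/2)·(1-q^{2n})(1-q^{4ℓ-2j+2}) / ((1-q²)(1-q^{4ℓ-2j+2n+2})) for 1 ≤ j ≤ 2ℓ. -/

import Mathlib

open Finset Polynomial MeasureTheory Matrix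
open scoped BigOperators ComplexOrder

noncomputable section

/-- q-shifted factorial `(a;p)_n`. -/
def qp (a p : ℂ) (n : ℕ) : ℂ := ∏ j ∈ Finset.range n, (1 - a * p ^ j)

/-- q-Racah polynomial `R_n(μ(x);α,β,γ,δ;p)`. -/
def qRacah (p α β γ δ : ℂ) (n x : ℕ) : ℂ :=
  ∑ k ∈ Finset.range (min n x + 1),
    qp (p ^ (-(n : ℤ))) p k * qp (α * β * p ^ (n + 1)) p k *
        qp (p ^ (-(x : ℤ))) p k * qp (γ * δ * p ^ (x + 1)) p k /
      (qp (α * p) p k * qp (β * δ * p) p k * qp (γ * p) p k * qp p p k) * p ^ k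

/-- `IsUltra C` says that for each base `p`, parameter `β` and degree `n`, `C p β n` is
the continuous q-ultraspherical polynomial: it has degree at most `n` and its values at
`(z+z⁻¹)/2` are given by the symmetric Laurent sum. -/
def IsUltra (C : ℂ → ℂ → ℕ → Polynomial ℂ) : Prop :=
  ∀ (p β : ℂ) (n : ℕ),
    (C p β n).degree ≤ (n : ℕ) ∧
      ∀ z : ℂ, z ≠ 0 →
        (C p β n).eval ((z + z⁻¹) / 2) =
          ∑ r ∈ Finset.range (n + 1),
            qp β p r * qp β p (n - r) / (qp p p r * qp p p (n - r)) * z ^ ((n : ℤ) - 2 * r)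

/-- The matrix-valued polynomial `P_n` (entries in `Polynomial ℂ`); here `L = 2ℓ`. -/
def Pm (q : ℂ) (L : ℕ) (C : ℂ → ℂ → ℕ → Polynomial ℂ) (n : ℕ) :
    Matrix (Fin (L + 1)) (Fin (L + 1)) (Polynomial ℂ) :=
  Matrix.of fun i j =>
    ∑ k ∈ Finset.Icc (i : ℕ) (min L (n + (j : ℕ))),
      Polynomial.C
          ((-1 : ℂ) ^ k *
            q ^ ((n : ℤ) + (2 * (k : ℤ) + 1) * ((k : ℤ) - ((i : ℕ) : ℤ)) +
                ((j : ℕ) : ℤ) * (2 * (k : ℤ) + 1) + 2 * (k : ℤ) * ((L : ℤ) + (n : ℤ) + 1) -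
                (k : ℤ) ^ 2) *
            (qp (q ^ 2) (q ^ 2) k * qp (q ^ 2) (q ^ 2) (k + (i : ℕ)) /
              (qp (q ^ 2) (q ^ 2) (2 * k) * qp (q ^ 2) (q ^ 2) (i : ℕ))) *
            (qp (q ^ (-(2 * (L : ℤ)))) (q ^ 2) k *
                qp (q ^ (-(2 * ((j : ℕ) : ℤ) + 2 * (n : ℤ)))) (q ^ 2) k /
              (qp (q ^ 2) (q ^ 2) k * qp (q ^ (2 * (L : ℤ) + 4)) (q ^ 2) k)) *
            (qp (q ^ 2) (q ^ 2) (n + (j : ℕ) - k) /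
              qp (q ^ (4 * (k : ℤ) + 4)) (q ^ 2) (n + (j : ℕ) - k)) *
            qRacah (q ^ 2) 1 1 (q ^ (-(2 * (n : ℤ) + 2 * ((j : ℕ) : ℤ) + 2)))
              (q ^ (-(2 * (L : ℤ) + 2))) k (j : ℕ)) *
        (C (q ^ 2) (q ^ (-(2 * (k : ℤ)))) (k - (i : ℕ)) *
          C (q ^ 2) (q ^ (2 * (k : ℤ) + 2)) (n + (j : ℕ) - k))

/-- Evaluation of the matrix-valued polynomial `P_n` at a point. -/
def evP (q : ℂ) (L : ℕ) (C : ℂ → ℂ → ℕ → Polynomial ℂ) (n : ℕ) (x : ℂ) :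
    Matrix (Fin (L + 1)) (Fin (L + 1)) ℂ :=
  (Pm q L C n).map (Polynomial.eval x)

/-- The coefficients `α_t(m,n)` of the weight. -/
def alphaC (q : ℂ) (L m n t : ℕ) : ℂ :=
  q ^ (2 * (n : ℤ) * ((L : ℤ) + 1) - (n : ℤ) ^ 2 - (2 * (L : ℤ) + 3) * (t : ℤ) + (t : ℤ) ^ 2 -
      (L : ℤ) + (m : ℤ)) *
    ((1 - q ^ (2 * (L : ℤ) + 2)) / (1 - q ^ (2 * (m : ℤ) + 2))) *
    (qp (q ^ 2) (q ^ 2) (L - n) * qp (q ^ 2) (q ^ 2) n / qp (q ^ 2) (q ^ 2) L) *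
    ((-1 : ℂ) ^ ((m : ℤ) - (t : ℤ)) * qp (q ^ (2 * (m : ℤ) - 2 * (L : ℤ))) (q ^ 2) (n - t) /
      qp (q ^ (2 * (m : ℤ) + 4)) (q ^ 2) (n - t)) *
    (qp (q ^ (2 * (L : ℤ) + 4 - 2 * (t : ℤ))) (q ^ 2) t / qp (q ^ 2) (q ^ 2) t)

/-- The matrix weight `W(x)`. -/
def Wm (q : ℂ) (L : ℕ) (x : ℂ) : Matrix (Fin (L + 1)) (Fin (L + 1)) ℂ :=
  Matrix.of fun i j =>
    ∑ t ∈ Finset.range (max (i : ℕ) (j : ℕ) + 1),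
      alphaC q L (min (i : ℕ) (j : ℕ)) (max (i : ℕ) (j : ℕ)) t *
        (Polynomial.Chebyshev.U ℂ
            ((min (i : ℕ) (j : ℕ) : ℤ) + (max (i : ℕ) (j : ℕ) : ℤ) - 2 * (t : ℤ))).eval x

/-- The antidiagonal involution `J`. -/
def Jm (L : ℕ) : Matrix (Fin (L + 1)) (Fin (L + 1)) ℂ :=
  Matrix.of fun i j => if (i : ℕ) + (j : ℕ) = L then 1 else 0

/-- The diagonal leading-coefficient matrix `Γ_n`. -/
def Gam (q : ℂ) (L n : ℕ) : Matrix (Fin (L + 1)) (Fin (L + 1)) ℂ :=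
  Matrix.diagonal fun i =>
    2 ^ n * q ^ n * qp (q ^ (2 * ((i : ℕ) : ℤ) + 2)) (q ^ 2) n *
        qp (q ^ (2 * (L : ℤ) - 2 * ((i : ℕ) : ℤ) + 2)) (q ^ 2) n /
      (qp (q ^ 2) (q ^ 2) n * qp (q ^ (2 * (L : ℤ) + 4)) (q ^ 2) n)

/-- The squared-norm matrix `G_m`. -/
def Gmat (q : ℂ) (L m : ℕ) : Matrix (Fin (L + 1)) (Fin (L + 1)) ℂ :=
  Matrix.diagonal fun i =>
    q ^ (2 * (m : ℤ) - (L : ℤ)) * (1 - q ^ (2 * (L : ℤ) + 2)) ^ 2 /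
      ((1 - q ^ (2 * (m : ℤ) + 2 * ((i : ℕ) : ℤ) + 2)) *
        (1 - q ^ (2 * (L : ℤ) - 2 * ((i : ℕ) : ℤ) + 2 * (m : ℤ) + 2)))

/-- The unipotent lower triangular matrix `L(x)` of the LDU decomposition. -/
def Lm (q : ℂ) (L : ℕ) (C : ℂ → ℂ → ℕ → Polynomial ℂ) (x : ℂ) :
    Matrix (Fin (L + 1)) (Fin (L + 1)) ℂ :=
  Matrix.of fun m k =>
    if (k : ℕ) ≤ (m : ℕ) then
      q ^ (((m : ℕ) : ℤ) - ((k : ℕ) : ℤ)) * qp (q ^ 2) (q ^ 2) (m : ℕ) *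
          qp (q ^ 2) (q ^ 2) (2 * (k : ℕ) + 1) /
          (qp (q ^ 2) (q ^ 2) ((m : ℕ) + (k : ℕ) + 1) * qp (q ^ 2) (q ^ 2) (k : ℕ)) *
        (C (q ^ 2) (q ^ (2 * (k : ℕ) + 2)) ((m : ℕ) - (k : ℕ))).eval x
    else 0

/-- The claimed inverse of `L(x)`. -/
def Linv (q : ℂ) (L : ℕ) (C : ℂ → ℂ → ℕ → Polynomial ℂ) (x : ℂ) :
    Matrix (Fin (L + 1)) (Fin (L + 1)) ℂ :=
  Matrix.of fun k n =>
    if (n : ℕ) ≤ (k : ℕ) then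
      q ^ ((2 * ((k : ℕ) : ℤ) + 1) * (((k : ℕ) : ℤ) - ((n : ℕ) : ℤ))) *
          qp (q ^ 2) (q ^ 2) (k : ℕ) * qp (q ^ 2) (q ^ 2) ((k : ℕ) + (n : ℕ)) /
          (qp (q ^ 2) (q ^ 2) (2 * (k : ℕ)) * qp (q ^ 2) (q ^ 2) (n : ℕ)) *
        (C (q ^ 2) (q ^ (-(2 * ((k : ℕ) : ℤ)))) ((k : ℕ) - (n : ℕ))).eval x
    else 0

/-- The constants `c_k(ℓ)`. -/
def ckC (q : ℂ) (L k : ℕ) : ℂ :=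
  q ^ (-(L : ℤ)) / 4 * (1 - q ^ (4 * k + 2)) * qp (q ^ 2) (q ^ 2) (L + k + 1) *
      qp (q ^ 2) (q ^ 2) (L - k) * qp (q ^ 2) (q ^ 2) k ^ 4 /
    (qp (q ^ 2) (q ^ 2) (2 * k + 1) ^ 2 * qp (q ^ 2) (q ^ 2) L ^ 2)

/-- The diagonal part `T(x)` of the LDU decomposition. -/
def Tm (q : ℂ) (L : ℕ) (x : ℂ) : Matrix (Fin (L + 1)) (Fin (L + 1)) ℂ :=
  Matrix.diagonal fun k =>
    ckC q L (k : ℕ) *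
      (4 * ∏ j ∈ Finset.Icc 1 (k : ℕ), (1 - 2 * (2 * x ^ 2 - 1) * q ^ (2 * j) + q ^ (4 * j)))

/-- The coefficient matrix `M₁(z)` of the q-difference operator `D₁`. -/
def M1f (q : ℂ) (L : ℕ) (z : ℂ) : Matrix (Fin (L + 1)) (Fin (L + 1)) ℂ :=
  Matrix.of fun i j =>
    if (j : ℕ) = (i : ℕ) + 1 then
      -(q ^ (1 - ((i : ℕ) : ℤ)) * (1 - q ^ (2 * (i : ℕ) + 2)) / (1 - q ^ 2) ^ 2 *
        (z / (1 - z ^ 2)))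
    else if (j : ℕ) = (i : ℕ) then
      q ^ (1 - ((i : ℕ) : ℤ)) / (1 - q ^ 2) ^ 2 *
        ((1 - q ^ (2 * (i : ℕ) + 2) * z ^ 2) / (1 - z ^ 2))
    else 0

/-- `M₂(z) = J M₁(z) J`. -/
def M2f (q : ℂ) (L : ℕ) (z : ℂ) : Matrix (Fin (L + 1)) (Fin (L + 1)) ℂ :=
  Jm L * M1f q L z * Jm L

/-- The eigenvalue matrix `Λ_n(1)`. -/
def Lam1 (q : ℂ) (L n : ℕ) : Matrix (Fin (L + 1)) (Fin (L + 1)) ℂ :=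
  Matrix.diagonal fun j =>
    (q ^ (-((j : ℕ) : ℤ) - (n : ℤ) - 1) + q ^ (((j : ℕ) : ℤ) + (n : ℤ) + 1)) / (q⁻¹ - q) ^ 2

/-- The eigenvalue matrix `Λ_n(2) = J Λ_n(1) J`. -/
def Lam2 (q : ℂ) (L n : ℕ) : Matrix (Fin (L + 1)) (Fin (L + 1)) ℂ :=
  Jm L * Lam1 q L n * Jm L

/-- The diagonal coefficient matrix `K₁(z)` of the decoupled operator. -/
def K1f (q : ℂ) (L : ℕ) (z : ℂ) : Matrix (Fin (L + 1)) (Fin (L + 1)) ℂ :=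
  Matrix.diagonal fun i =>
    q ^ (1 - ((i : ℕ) : ℤ)) / (1 - q ^ 2) ^ 2 *
      ((1 - q ^ (2 * (i : ℕ) + 2) * z ^ 2) / (1 - z ^ 2))

/-- The symmetric Laurent polynomial `Ĉ_k(z;β|p)`. -/
def Chat (p β : ℂ) (k : ℕ) (z : ℂ) : ℂ :=
  ∑ r ∈ Finset.range (k + 1),
    qp β p r * qp β p (k - r) / (qp p p r * qp p p (k - r)) * z ^ ((k : ℤ) - 2 * (r : ℤ))

/-- The matrix polynomials `R_n(x) = L(x)ᵀ P_n(x) Γ_n⁻¹`. -/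
def Rmat (q : ℂ) (L : ℕ) (C : ℂ → ℂ → ℕ → Polynomial ℂ) (n : ℕ) (x : ℂ) :
    Matrix (Fin (L + 1)) (Fin (L + 1)) ℂ :=
  (Lm q L C x)ᵀ * evP q L C n x * (Gam q L n)⁻¹

/-!
Put `p = q²`. The coefficient of `x^(n+j-i)` in the entry `(i, j)` of `P_n` is, up to an explicit
factor, the moment `∑ₖ w(k) r_j(k) φ_i(k)` of the q-Racah polynomial `r_j` of degree `j` against the
basis function `φ_i(k) = (p⁻ᵏ, pᵏ⁺¹; p)_i` for the q-Racah weight `w`. The q-Racah difference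
operator is symmetric with respect to `w`, has the `r_j` as eigenfunctions and is bidiagonal in the
`φ_i`, so the moments satisfy a two-term recursion in `i`. Hence they vanish for `i < j`, and for
`i ≥ j` they are determined by the last one, which is a q-Saalschütz sum. This gives the diagonal
coefficients `Γ_n` and the subdiagonal.

Above the diagonal an entry has degree at most `n+j-i`, and its coefficient there vanishes.
A first-order q-difference relation between consecutive rows shows that the leading coefficient of
an entry is then determined by the entry below it, so that the degree drops by one with each row and
the superdiagonal is read off from the diagonal. The diagonal entries have the parity of `n`, so
they contribute nothing to `x^(n-1)`.
-/

section Powers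

lemma two_mul_cast_choose_two (m : ℕ) : (2 * m.choose 2 : ℤ) = m * (m - 1) := by
  have h : (2 * m.choose 2 : ℚ) = m * (m - 1) := by
    rw [Nat.cast_choose_two]
    ring
  exact_mod_cast h

lemma pow_ne_one_of_not_isOfFinOrder {M : Type*} [Monoid M] {p : M} (hp : ¬IsOfFinOrder p) {m : ℕ}
    (hm : m ≠ 0) : p ^ m ≠ 1 := fun h =>
  hp (isOfFinOrder_iff_pow_eq_one.2 ⟨m, Nat.pos_of_ne_zero hm, h⟩)

variable {K : Type*} [Field K] {p : K}

lemma one_sub_pow_ne_zero (hp : ¬IsOfFinOrder p) {m : ℕ} (hm : m ≠ 0) : 1 - p ^ m ≠ 0 :=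
  sub_ne_zero.2 (pow_ne_one_of_not_isOfFinOrder hp hm).symm

lemma one_sub_zpow_ne_zero (hp : ¬IsOfFinOrder p) {m : ℤ} (hm : m ≠ 0) : 1 - p ^ m ≠ 0 := by
  have habs := pow_ne_one_of_not_isOfFinOrder hp (Int.natAbs_ne_zero.2 hm)
  refine sub_ne_zero.2 fun h => habs ?_
  rcases Int.natAbs_eq m with hm' | hm' <;> rw [hm'] at h
  · rw [← zpow_natCast, ← h]
  · rw [_root_.zpow_neg, zpow_natCast, eq_comm, inv_eq_one] at h
    exact h

lemma one_add_pow_ne_zero [NeZero (2 : K)] (hp : ¬IsOfFinOrder p) (m : ℕ) : 1 + p ^ m ≠ 0 := by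
  rcases eq_or_ne m 0 with rfl | hm
  · rw [pow_zero, one_add_one_eq_two]
    exact two_ne_zero
  · intro h
    refine pow_ne_one_of_not_isOfFinOrder hp (mul_ne_zero hm two_ne_zero) ?_
    rw [pow_mul]
    linear_combination (p ^ m - 1) * h

lemma one_sub_mul_pow_ne_zero (hp0 : p ≠ 0) (hp : ¬IsOfFinOrder p) {i N e : ℕ} (h : e + i ≠ N) :
    1 - p ^ ((i : ℤ) - N) * p ^ e ≠ 0 := by
  rw [← zpow_natCast, ← zpow_add₀ hp0]
  exact one_sub_zpow_ne_zero hp (by omega)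

lemma zpow_neg_natCast_succ_mul (hp0 : p ≠ 0) (k : ℕ) :
    p ^ (-((k + 1 : ℕ) : ℤ)) * p = p ^ (-(k : ℤ)) := by
  rw [← zpow_add_one₀ hp0]
  congr 1
  push_cast
  ring

lemma one_sub_zpow_neg_natCast (hp0 : p ≠ 0) (m : ℕ) :
    1 - p ^ (-(m : ℤ)) = -((1 - p ^ m) / p ^ m) := by
  rw [_root_.zpow_neg, zpow_natCast]
  field_simp
  ring

lemma one_sub_zpow_of_eq_neg (hp0 : p ≠ 0) {a : ℤ} {m : ℕ} (h : a = -m) :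
    1 - p ^ a = -((1 - p ^ m) / p ^ m) := by
  rw [h, one_sub_zpow_neg_natCast hp0]

lemma sq_zpow (p : K) (a : ℤ) : (p ^ 2) ^ a = p ^ (2 * a) := by
  rw [_root_.zpow_mul, zpow_ofNat]

lemma zpow_two_mul_add_two (p : K) (k : ℕ) : p ^ (2 * (k : ℤ) + 2) = (p ^ 2) ^ (k + 1) := by
  rw [← pow_mul, ← zpow_natCast]
  congr 1

lemma zpow_sub_mul_pow_add (hp0 : p ≠ 0) (i N : ℕ) :
    p ^ ((i : ℤ) - N) * p ^ (N + i + 2) = (p ^ 2) ^ (i + 1) := by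
  rw [← pow_mul, ← zpow_natCast, ← zpow_natCast, ← zpow_add₀ hp0]
  congr 1
  push_cast
  ring

end Powers

section QShiftedFactorial

variable {p : ℂ}

lemma qp_zero (a p : ℂ) : qp a p 0 = 1 := prod_range_zero _

lemma qp_succ (a p : ℂ) (n : ℕ) : qp a p (n + 1) = qp a p n * (1 - a * p ^ n) :=
  prod_range_succ _ _

lemma qp_add (a p : ℂ) (m n : ℕ) : qp a p (m + n) = qp a p m * qp (a * p ^ m) p n := by
  simp only [qp, prod_range_add, pow_add, mul_assoc]

lemma qp_succ' (a p : ℂ) (n : ℕ) : qp a p (n + 1) = (1 - a) * qp (a * p) p n := by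
  rw [add_comm, qp_add, qp_succ, qp_zero, pow_zero, pow_one, one_mul, mul_one]

lemma qp_self_succ (p : ℂ) (n : ℕ) : qp p p (n + 1) = qp p p n * (1 - p ^ (n + 1)) := by
  rw [qp_succ, pow_succ']

lemma qp_ne_zero {a : ℂ} {n : ℕ} (h : ∀ k < n, 1 - a * p ^ k ≠ 0) : qp a p n ≠ 0 :=
  prod_ne_zero_iff.2 fun k hk => h k (mem_range.1 hk)

lemma qp_self_ne_zero (hp : ¬IsOfFinOrder p) (n : ℕ) : qp p p n ≠ 0 :=
  qp_ne_zero fun k _ => by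
    rw [← pow_succ']
    exact one_sub_pow_ne_zero hp k.succ_ne_zero

lemma qp_pow_succ (hp : ¬IsOfFinOrder p) (a n : ℕ) :
    qp (p ^ (a + 1)) p n = qp p p (a + n) / qp p p a := by
  rw [qp_add, ← pow_succ', mul_div_cancel_left₀ _ (qp_self_ne_zero hp a)]

lemma qp_zpow_neg (hp0 : p ≠ 0) (hp : ¬IsOfFinOrder p) {a m : ℕ} (hm : m ≤ a) :
    qp (p ^ (-(a : ℤ))) p m =
      (-1) ^ m * p ^ ((m.choose 2 : ℤ) - a * m) * (qp p p a / qp p p (a - m)) := by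
  have hF := qp_self_ne_zero hp
  induction m with
  | zero => simp [qp_zero, hF a]
  | succ m ih =>
    obtain ⟨b, rfl⟩ := Nat.exists_eq_add_of_le hm
    rw [qp_succ, ih (by omega), show m + 1 + b - m = b + 1 by omega,
      show m + 1 + b - (m + 1) = b by omega, qp_self_succ, Nat.choose_succ_succ' m 1,
      Nat.choose_one_right]
    have hexp : p ^ (((m + m.choose 2 : ℕ) : ℤ) - ((m + 1 + b : ℕ) : ℤ) * ((m + 1 : ℕ) : ℤ)) *
        p ^ (b + 1) = p ^ ((m.choose 2 : ℤ) - ((m + 1 + b : ℕ) : ℤ) * m) := by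
      rw [← zpow_natCast p (b + 1), ← zpow_add₀ hp0]
      congr 1
      push_cast
      ring
    have hfac : p ^ (-((m + 1 + b : ℕ) : ℤ)) * p ^ m * p ^ (b + 1) = 1 := by
      rw [mul_assoc, ← pow_add, _root_.zpow_neg, zpow_natCast, show m + (b + 1) = m + 1 + b by ring,
        inv_mul_cancel₀ (pow_ne_zero _ hp0)]
    have hb := one_sub_pow_ne_zero hp b.succ_ne_zero
    rw [← hexp]
    field_simp [hF b]
    linear_combination -((-1) ^ m * qp p p (m + 1 + b)) * hfac

lemma qp_zpow_neg_ne_zero (hp0 : p ≠ 0) (hp : ¬IsOfFinOrder p) {a m : ℕ} (hm : m ≤ a) :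
    qp (p ^ (-(a : ℤ))) p m ≠ 0 := by
  have hF := qp_self_ne_zero hp
  rw [qp_zpow_neg hp0 hp hm]
  exact mul_ne_zero (mul_ne_zero (pow_ne_zero _ (neg_ne_zero.2 one_ne_zero)) (zpow_ne_zero _ hp0))
    (div_ne_zero (hF _) (hF _))

lemma qp_zpow_neg_eq_zero (hp0 : p ≠ 0) {a m : ℕ} (hm : a < m) :
    qp (p ^ (-(a : ℤ))) p m = 0 :=
  prod_eq_zero (mem_range.2 hm) (by
    rw [_root_.zpow_neg, zpow_natCast, inv_mul_cancel₀ (pow_ne_zero _ hp0), sub_self])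

/-- The terms of the q-Pfaff–Saalschütz sum in convolution form, that is, of the coefficient
of `z ^ (k + m)` in the product of `₂φ₁(a, b; c; x z)` and `₁φ₀(x; z)`. -/
def saalschutzTerm (p a b c x : ℂ) (k m : ℕ) : ℂ :=
  x ^ k * (qp a p k * qp b p k) / (qp p p k * qp c p k) * (qp x p m / qp p p m)

lemma saalschutzTerm_succ_left (hp : ¬IsOfFinOrder p) {c : ℂ} (hc : ∀ k : ℕ, 1 - c * p ^ k ≠ 0)
    (a b x : ℂ) (k m : ℕ) :
    (1 - p ^ (k + 1)) * (1 - c * p ^ k) * saalschutzTerm p a b c x (k + 1) m =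
      x * (1 - a * p ^ k) * (1 - b * p ^ k) * saalschutzTerm p a b c x k m := by
  have hF := qp_self_ne_zero hp k
  have hc' := qp_ne_zero (n := k) fun j _ => hc j
  have hp1 := one_sub_pow_ne_zero hp k.succ_ne_zero
  have hck := hc k
  simp only [saalschutzTerm, qp_self_succ]
  simp only [qp_succ _ _ k, pow_succ x]
  field_simp

lemma saalschutzTerm_succ_right (hp : ¬IsOfFinOrder p) (a b c x : ℂ) (k m : ℕ) :
    (1 - p ^ (m + 1)) * saalschutzTerm p a b c x k (m + 1) =
      (1 - x * p ^ m) * saalschutzTerm p a b c x k m := by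
  have hp1 := one_sub_pow_ne_zero hp m.succ_ne_zero
  simp only [saalschutzTerm, qp_self_succ, qp_succ x]
  field_simp

lemma sum_saalschutzTerm_succ (hp0 : p ≠ 0) (hp : ¬IsOfFinOrder p) {a b c x : ℂ}
    (habx : a * b * x = c) (hc : ∀ k : ℕ, 1 - c * p ^ k ≠ 0) (n : ℕ) :
    (1 - c * p ^ n) * (1 - p ^ (n + 1)) *
        ∑ r ∈ antidiagonal (n + 1), saalschutzTerm p a b c x r.1 r.2 =
      (1 - a * x * p ^ n) * (1 - b * x * p ^ n) *
        ∑ r ∈ antidiagonal n, saalschutzTerm p a b c x r.1 r.2 := by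
  set t := saalschutzTerm p a b c x with ht
  have hsplit : ∀ r ∈ antidiagonal (n + 1),
      (1 - c * p ^ n) * (1 - p ^ (n + 1)) * t r.1 r.2 =
        p ^ r.2 * ((1 - p ^ r.1) * (1 - c * (p ^ r.1 / p)) * t r.1 r.2) +
          (1 - c * (p ^ (2 * r.1 + r.2) / p)) * ((1 - p ^ r.2) * t r.1 r.2) := by
    intro r hr
    have hn : p ^ n = p ^ r.1 * p ^ r.2 / p := by
      rw [← pow_add, mem_antidiagonal.1 hr, pow_succ, mul_div_cancel_right₀ _ hp0]
    rw [pow_succ, hn, pow_add, pow_mul']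
    field_simp
    ring
  rw [mul_sum, sum_congr rfl hsplit, sum_add_distrib, Nat.sum_antidiagonal_succ,
    Nat.sum_antidiagonal_succ' (n := n)]
  simp only [pow_zero, sub_self, zero_mul, mul_zero, zero_add, add_zero]
  rw [← sum_add_distrib, mul_sum]
  refine sum_congr rfl fun r hr => ?_
  have hleft : (1 - p ^ (r.1 + 1)) * (1 - c * (p ^ (r.1 + 1) / p)) * t (r.1 + 1) r.2 =
      x * (1 - a * p ^ r.1) * (1 - b * p ^ r.1) * t r.1 r.2 := by
    rw [pow_succ, mul_div_cancel_right₀ _ hp0, ← pow_succ]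
    exact saalschutzTerm_succ_left hp hc a b x r.1 r.2
  rw [hleft, ht, saalschutzTerm_succ_right hp, ← mem_antidiagonal.1 hr]
  simp only [pow_add, pow_mul', pow_one]
  field_simp
  rw [← habx]
  ring

theorem sum_antidiagonal_qSaalschutz (hp0 : p ≠ 0) (hp : ¬IsOfFinOrder p) {a b c x : ℂ}
    (habx : a * b * x = c) (hc : ∀ k : ℕ, 1 - c * p ^ k ≠ 0) (n : ℕ) :
    ∑ r ∈ antidiagonal n, saalschutzTerm p a b c x r.1 r.2 =
      qp (a * x) p n * qp (b * x) p n / (qp c p n * qp p p n) := by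
  induction n with
  | zero => simp [saalschutzTerm, qp_zero]
  | succ n ih =>
    have hF := qp_self_ne_zero hp n
    have hc' := qp_ne_zero (n := n) fun j _ => hc j
    have hcn : 1 - p ^ n * c ≠ 0 := mul_comm c (p ^ n) ▸ hc n
    have hp1 := one_sub_pow_ne_zero hp n.succ_ne_zero
    refine mul_left_cancel₀ (mul_ne_zero (hc n) hp1) ?_
    rw [Nat.succ_eq_add_one, sum_saalschutzTerm_succ hp0 hp habx hc, ih, qp_self_succ]
    simp only [qp_succ _ _ n]
    field_simp

end QShiftedFactorial

section RacahOperator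

variable {p : ℂ}

/-- The basis `(p^{-k}, p^{k+1}; p)_s`, `s = 0, 1, …`, of the polynomials in `p^{-k} + p^{k+1}`,
in which q-Racah polynomials are expanded. -/
def racahBasis (p : ℂ) (s k : ℕ) : ℂ := qp (p ^ (-(k : ℤ))) p s * qp (p ^ (k + 1)) p s

/-- The coefficient of the forward difference in the q-Racah operator. -/
def racahUp (p : ℂ) (L N k : ℕ) : ℂ :=
  (1 - p ^ (k + 1)) * (1 - p ^ ((k : ℤ) - L)) * (1 - p ^ ((k : ℤ) - N)) /
    ((1 + p ^ (k + 1)) * (1 - p ^ (2 * k + 1)))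

/-- The coefficient of the backward difference in the q-Racah operator. -/
def racahDown (p : ℂ) (L N k : ℕ) : ℂ :=
  (1 - p ^ k) * (1 - p ^ (k + L + 1)) * (1 - p ^ (k + N + 1)) /
    (p ^ (L + N + 1) * (1 + p ^ k) * (1 - p ^ (2 * k + 1)))

/-- The q-Racah difference operator with truncation parameters `p^{-L-1}` and `p^{-N-1}`. At
`k = 0` the value `k - 1 = 0` is harmless because `racahDown p L N 0 = 0`. -/
def racahOp (p : ℂ) (L N : ℕ) (f : ℕ → ℂ) (k : ℕ) : ℂ :=
  racahUp p L N k * (f (k + 1) - f k) + racahDown p L N k * (f (k - 1) - f k)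

/-- The eigenvalue of the q-Racah operator on q-Racah polynomials of degree `j`. -/
def racahEigenvalue (p : ℂ) (L N j : ℕ) : ℂ :=
  (p ^ (-(j : ℤ)) - 1) * (1 - p ^ ((j : ℤ) - L - N - 1))

/-- The off-diagonal entry of the q-Racah operator in `racahBasis`, where it is bidiagonal. -/
def racahStep (p : ℂ) (L N s : ℕ) : ℂ :=
  -((1 - p ^ (s + 1)) ^ 2 * (1 - p ^ ((s : ℤ) - L)) * (1 - p ^ ((s : ℤ) - N)) / p ^ (s + 1))

lemma racahDown_zero (p : ℂ) (L N : ℕ) : racahDown p L N 0 = 0 := by simp [racahDown]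

lemma racahUp_min (p : ℂ) (L N : ℕ) : racahUp p L N (min L N) = 0 := by
  rcases min_choice L N with h | h <;> simp [racahUp, h]

lemma racahBasis_zero (p : ℂ) (k : ℕ) : racahBasis p 0 k = 1 := by simp [racahBasis, qp_zero]

lemma racahBasis_succ (p : ℂ) (s k : ℕ) :
    racahBasis p (s + 1) k =
      racahBasis p s k * ((1 - p ^ (-(k : ℤ)) * p ^ s) * (1 - p ^ (k + 1) * p ^ s)) := by
  rw [racahBasis, qp_succ, qp_succ, racahBasis]
  ring

lemma racahBasis_eq_zero (hp0 : p ≠ 0) {s k : ℕ} (h : k < s) : racahBasis p s k = 0 := by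
  rw [racahBasis, qp_zpow_neg_eq_zero hp0 h, zero_mul]

lemma racahBasis_diff (hp0 : p ≠ 0) (s k : ℕ) :
    racahBasis p (s + 1) (k + 1) - racahBasis p (s + 1) k =
      -((1 - p ^ (s + 1)) * (1 - p ^ (2 * (k + 1))) / p ^ (k + 1)) *
        (qp (p ^ (-(k : ℤ))) p s * qp (p ^ (k + 1 + 1)) p s) := by
  have hnext : racahBasis p (s + 1) (k + 1) =
      (1 - p ^ (-((k + 1 : ℕ) : ℤ))) * qp (p ^ (-(k : ℤ))) p s *
        (qp (p ^ (k + 1 + 1)) p s * (1 - p ^ (k + 1 + 1) * p ^ s)) := by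
    rw [racahBasis, qp_succ', zpow_neg_natCast_succ_mul hp0, qp_succ]
  have hcur : racahBasis p (s + 1) k =
      qp (p ^ (-(k : ℤ))) p s * (1 - p ^ (-(k : ℤ)) * p ^ s) *
        ((1 - p ^ (k + 1)) * qp (p ^ (k + 1 + 1)) p s) := by
    rw [racahBasis, qp_succ, qp_succ' (p ^ (k + 1)), ← pow_succ]
  rw [hnext, hcur]
  simp only [_root_.zpow_neg, zpow_natCast]
  field_simp
  ring

lemma racahBasis_forward_diff (hp0 : p ≠ 0) (s k : ℕ) :
    (1 - p ^ (k + 1)) * (racahBasis p (s + 1) (k + 1) - racahBasis p (s + 1) k) =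
      -((1 - p ^ (s + 1)) * (1 - p ^ (2 * (k + 1))) * (1 - p ^ (k + 1 + s)) / p ^ (k + 1)) *
        racahBasis p s k := by
  have hqp : qp (p ^ (k + 1)) p s * (1 - p ^ (k + 1) * p ^ s) =
      (1 - p ^ (k + 1)) * qp (p ^ (k + 1 + 1)) p s := by
    rw [← qp_succ, qp_succ', ← pow_succ]
  rw [racahBasis_diff hp0, racahBasis, pow_add p (k + 1) s]
  linear_combination ((1 - p ^ (s + 1)) * (1 - p ^ (2 * (k + 1))) / p ^ (k + 1) *
    qp (p ^ (-(k : ℤ))) p s) * hqp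

lemma racahBasis_backward_diff (hp0 : p ≠ 0) (s k : ℕ) :
    (1 - p ^ k) * (racahBasis p (s + 1) (k - 1) - racahBasis p (s + 1) k) =
      -((1 - p ^ (s + 1)) * (1 - p ^ (2 * k)) * (1 - p ^ ((s : ℤ) - k))) * racahBasis p s k := by
  cases k with
  | zero => simp
  | succ k =>
    have hqp : qp (p ^ (-((k + 1 : ℕ) : ℤ))) p s * (1 - p ^ (-((k + 1 : ℕ) : ℤ)) * p ^ s) =
        (1 - p ^ (-((k + 1 : ℕ) : ℤ))) * qp (p ^ (-(k : ℤ))) p s := by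
      rw [← qp_succ, qp_succ', zpow_neg_natCast_succ_mul hp0]
    have hinv : (1 - p ^ (k + 1)) / p ^ (k + 1) = -(1 - p ^ (-((k + 1 : ℕ) : ℤ))) := by
      rw [_root_.zpow_neg, zpow_natCast]
      field_simp
      ring
    have hpow : p ^ ((s : ℤ) - (k + 1 : ℕ)) = p ^ (-((k + 1 : ℕ) : ℤ)) * p ^ s := by
      rw [← zpow_natCast p s, ← zpow_add₀ hp0, neg_add_eq_sub]
    rw [Nat.add_sub_cancel, ← neg_sub (racahBasis p (s + 1) (k + 1)), racahBasis_diff hp0,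
      racahBasis, hpow]
    linear_combination ((1 - p ^ (s + 1)) * (1 - p ^ (2 * (k + 1))) * qp (p ^ (k + 1 + 1)) p s) *
      (qp (p ^ (-(k : ℤ))) p s * hinv + hqp)

lemma racahUp_mul_diff (hp0 : p ≠ 0) (hp : ¬IsOfFinOrder p) (L N s k : ℕ) :
    racahUp p L N k * (racahBasis p (s + 1) (k + 1) - racahBasis p (s + 1) k) =
      -((1 - p ^ (s + 1)) * (1 - p ^ (k + 1)) * (1 - p ^ (k + 1 + s)) *
        (1 - p ^ ((k : ℤ) - L)) * (1 - p ^ ((k : ℤ) - N)) /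
          (p ^ (k + 1) * (1 - p ^ (2 * k + 1)))) * racahBasis p s k := by
  have hplus := one_add_pow_ne_zero hp (k + 1)
  have hsq : 1 - p ^ (2 * (k + 1)) = (1 - p ^ (k + 1)) * (1 + p ^ (k + 1)) := by ring
  have hdiff := racahBasis_forward_diff hp0 s k
  rw [hsq] at hdiff
  calc _ = (1 - p ^ (k + 1)) * (racahBasis p (s + 1) (k + 1) - racahBasis p (s + 1) k) *
        ((1 - p ^ ((k : ℤ) - L)) * (1 - p ^ ((k : ℤ) - N)) /
          ((1 + p ^ (k + 1)) * (1 - p ^ (2 * k + 1)))) := by rw [racahUp]; ring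
    _ = _ := by rw [hdiff]; field_simp

lemma racahDown_mul_diff (hp0 : p ≠ 0) (hp : ¬IsOfFinOrder p) (L N s k : ℕ) :
    racahDown p L N k * (racahBasis p (s + 1) (k - 1) - racahBasis p (s + 1) k) =
      -((1 - p ^ (s + 1)) * (1 - p ^ k) * (1 - p ^ ((s : ℤ) - k)) *
        (1 - p ^ (k + L + 1)) * (1 - p ^ (k + N + 1)) /
          (p ^ (L + N + 1) * (1 - p ^ (2 * k + 1)))) * racahBasis p s k := by
  have hplus := one_add_pow_ne_zero hp k
  have hsq : 1 - p ^ (2 * k) = (1 - p ^ k) * (1 + p ^ k) := by ring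
  have hdiff := racahBasis_backward_diff hp0 s k
  rw [hsq] at hdiff
  calc _ = (1 - p ^ k) * (racahBasis p (s + 1) (k - 1) - racahBasis p (s + 1) k) *
        ((1 - p ^ (k + L + 1)) * (1 - p ^ (k + N + 1)) /
          (p ^ (L + N + 1) * (1 + p ^ k) * (1 - p ^ (2 * k + 1)))) := by rw [racahDown]; ring
    _ = _ := by rw [hdiff]; field_simp

lemma racahOp_racahBasis_zero (p : ℂ) (L N k : ℕ) : racahOp p L N (racahBasis p 0) k = 0 := by
  simp [racahOp, racahBasis_zero]

lemma racahOp_racahBasis_succ (hp0 : p ≠ 0) (hp : ¬IsOfFinOrder p) (L N s k : ℕ) :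
    racahOp p L N (racahBasis p (s + 1)) k =
      racahEigenvalue p L N (s + 1) * racahBasis p (s + 1) k +
        racahStep p L N s * racahBasis p s k := by
  have hodd := one_sub_pow_ne_zero hp (2 * k).succ_ne_zero
  rw [racahOp, racahUp_mul_diff hp0 hp, racahDown_mul_diff hp0 hp, racahBasis_succ,
    racahEigenvalue, racahStep]
  simp only [zpow_sub₀ hp0, zpow_add₀ hp0, _root_.zpow_neg, zpow_natCast, zpow_one,
    Nat.cast_add, Nat.cast_one]
  field_simp
  ring

end RacahOperator

section RacahMoment

variable {p : ℂ}

/-- The coefficients of a q-Racah polynomial of degree `j` in the basis `racahBasis`. -/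
def racahCoeff (p : ℂ) (L N j s : ℕ) : ℂ :=
  qp (p ^ (-(j : ℤ))) p s * qp (p ^ ((j : ℤ) - L - N - 1)) p s /
    (qp p p s ^ 2 * (qp (p ^ (-(L : ℤ))) p s * qp (p ^ (-(N : ℤ))) p s)) * p ^ s

/-- The q-Racah polynomial of degree `j` at the lattice point `k`, an eigenfunction of `racahOp`. -/
def racahFun (p : ℂ) (L N j k : ℕ) : ℂ :=
  ∑ s ∈ range (j + 1), racahCoeff p L N j s * racahBasis p s k

/-- The weight on `{0, …, min L N}` for which the q-Racah operator is symmetric. -/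
def racahWeight (p : ℂ) (L N k : ℕ) : ℂ :=
  p ^ k ^ 2 * (1 - p ^ (2 * k + 1)) /
    (qp p p (L - k) * qp p p (N - k) * (qp p p (L + k + 1) * qp p p (N + k + 1)))

/-- The pairing of the q-Racah polynomial of degree `j` with the basis function of degree `i`. -/
def racahMoment (p : ℂ) (L N j i : ℕ) : ℂ :=
  ∑ k ∈ range (min L N + 1), racahWeight p L N k * racahFun p L N j k * racahBasis p i k

lemma racahMoment_comm (p : ℂ) (L N j i : ℕ) : racahMoment p L N j i = racahMoment p N L j i := by
  rw [racahMoment, racahMoment, min_comm]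
  refine sum_congr rfl fun k _ => ?_
  have hcoeff (s : ℕ) : racahCoeff p L N j s = racahCoeff p N L j s := by
    rw [racahCoeff, racahCoeff, mul_comm (qp (p ^ (-(L : ℤ))) p s), sub_right_comm (j : ℤ)]
  simp only [racahFun, hcoeff]
  rw [racahWeight, racahWeight, mul_comm (qp p p (L - k)), mul_comm (qp p p (L + k + 1))]

lemma racahEigenvalue_zero (p : ℂ) (L N : ℕ) : racahEigenvalue p L N 0 = 0 := by
  simp [racahEigenvalue]

lemma racahEigenvalue_sub (hp0 : p ≠ 0) (L N j i : ℕ) :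
    racahEigenvalue p L N j - racahEigenvalue p L N i =
      -((1 - p ^ ((i : ℤ) - j)) * (1 - p ^ ((j : ℤ) - L - N - 1 + i)) / p ^ i) := by
  simp only [racahEigenvalue, zpow_sub₀ hp0, zpow_add₀ hp0, _root_.zpow_neg, zpow_natCast, zpow_one]
  field_simp
  ring

lemma racahEigenvalue_sub_ne_zero (hp0 : p ≠ 0) (hp : ¬IsOfFinOrder p) {L N j i : ℕ}
    (hij : i ≠ j) (hLN : i + j ≤ L + N) :
    racahEigenvalue p L N j - racahEigenvalue p L N i ≠ 0 := by
  rw [racahEigenvalue_sub hp0]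
  exact neg_ne_zero.2 (div_ne_zero (mul_ne_zero (one_sub_zpow_ne_zero hp (by omega))
    (one_sub_zpow_ne_zero hp (by omega))) (pow_ne_zero _ hp0))

lemma racahCoeff_succ (hp0 : p ≠ 0) (hp : ¬IsOfFinOrder p) {L N j s : ℕ} (hL : s < L)
    (hN : s < N) :
    racahCoeff p L N j (s + 1) * racahStep p L N s =
      (racahEigenvalue p L N j - racahEigenvalue p L N s) * racahCoeff p L N j s := by
  have hshift (a : ℤ) : p ^ a * p ^ s = p ^ (a + s) := by rw [zpow_add₀ hp0, zpow_natCast]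
  have hF := qp_self_ne_zero hp s
  have hLs := qp_zpow_neg_ne_zero hp0 hp hL.le
  have hNs := qp_zpow_neg_ne_zero hp0 hp hN.le
  have hL1 := one_sub_zpow_ne_zero hp (m := (s : ℤ) - L) (by omega)
  have hN1 := one_sub_zpow_ne_zero hp (m := (s : ℤ) - N) (by omega)
  have hs1 := one_sub_pow_ne_zero hp s.succ_ne_zero
  rw [racahEigenvalue_sub hp0, racahCoeff, racahCoeff, racahStep, qp_self_succ]
  simp only [qp_succ _ _ s, hshift, neg_add_eq_sub]
  field_simp

lemma racahOp_racahFun (hp0 : p ≠ 0) (hp : ¬IsOfFinOrder p) {L N j : ℕ} (hL : j ≤ L)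
    (hN : j ≤ N) (k : ℕ) :
    racahOp p L N (racahFun p L N j) k = racahEigenvalue p L N j * racahFun p L N j k := by
  set d := racahCoeff p L N j with hd
  have hlin : racahOp p L N (racahFun p L N j) k =
      ∑ s ∈ range (j + 1), d s * racahOp p L N (racahBasis p s) k := by
    simp only [racahOp, racahFun, ← sum_sub_distrib, mul_sum, ← sum_add_distrib]
    exact sum_congr rfl fun s _ => by ring
  have hdiag : ∑ s ∈ range j, d (s + 1) * (racahEigenvalue p L N (s + 1) * racahBasis p (s + 1) k) =
      ∑ s ∈ range (j + 1), d s * (racahEigenvalue p L N s * racahBasis p s k) := by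
    rw [sum_range_succ', racahEigenvalue_zero, zero_mul, mul_zero, add_zero]
  have hoff : ∑ s ∈ range j, d (s + 1) * (racahStep p L N s * racahBasis p s k) =
      ∑ s ∈ range (j + 1),
        (racahEigenvalue p L N j - racahEigenvalue p L N s) * d s * racahBasis p s k := by
    rw [sum_range_succ, sub_self, zero_mul, zero_mul, add_zero]
    refine sum_congr rfl fun s hs => ?_
    have hsj := mem_range.1 hs
    rw [hd, ← mul_assoc, racahCoeff_succ hp0 hp (hsj.trans_le hL) (hsj.trans_le hN)]
  rw [hlin, sum_range_succ', racahOp_racahBasis_zero, mul_zero, add_zero]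
  simp only [racahOp_racahBasis_succ hp0 hp, mul_add, sum_add_distrib]
  rw [hdiag, hoff, ← sum_add_distrib, racahFun, mul_sum]
  exact sum_congr rfl fun s _ => by ring

lemma racahWeight_mul_racahUp (hp0 : p ≠ 0) (hp : ¬IsOfFinOrder p) {L N k : ℕ} (hL : k < L)
    (hN : k < N) :
    racahWeight p L N k * racahUp p L N k =
      racahWeight p L N (k + 1) * racahDown p L N (k + 1) := by
  obtain ⟨l, rfl⟩ := Nat.exists_eq_add_of_lt hL
  obtain ⟨m, rfl⟩ := Nat.exists_eq_add_of_lt hN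
  have hF := qp_self_ne_zero hp
  have hone (a : ℕ) := one_sub_pow_ne_zero hp a.succ_ne_zero
  have hplus := one_add_pow_ne_zero hp (k + 1)
  have hodd := hone (2 * k)
  have hodd' := hone (2 * (k + 1))
  have hl := hone l
  have hm := hone m
  have hkl := hone (k + 1 + (k + l + 1))
  have hkm := hone (k + 1 + (k + m + 1))
  have hsub (a : ℕ) : 1 - p ^ ((k : ℤ) - (k + a + 1 : ℕ)) = -((1 - p ^ (a + 1)) / p ^ (a + 1)) := by
    rw [← one_sub_zpow_neg_natCast hp0]
    congr 2
    push_cast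
    ring
  have hF1 (a : ℕ) : qp p p (k + a + 1 + (k + 1) + 1) =
      qp p p (k + a + 1 + k + 1) * (1 - p ^ (k + 1 + (k + a + 1) + 1)) := by
    rw [← add_assoc _ k 1, qp_self_succ]
    congr 3
    ring
  rw [racahWeight, racahWeight, racahUp, racahDown, hsub, hsub, hF1, hF1,
    show k + l + 1 - k = l + 1 by omega, show k + m + 1 - k = m + 1 by omega,
    show k + l + 1 - (k + 1) = l by omega, show k + m + 1 - (k + 1) = m by omega,
    qp_self_succ p l, qp_self_succ p m]
  field_simp [hF]
  ring

lemma sum_weight_mul_differenceOp {R : Type*} [CommRing R] {w A C : ℕ → R} {M : ℕ} (hC : C 0 = 0)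
    (hA : A M = 0) (hw : ∀ k < M, w k * A k = w (k + 1) * C (k + 1)) (f g : ℕ → R) :
    ∑ k ∈ range (M + 1), w k * (A k * (f (k + 1) - f k) + C k * (f (k - 1) - f k)) * g k =
      -∑ k ∈ range M, w k * A k * ((f (k + 1) - f k) * (g (k + 1) - g k)) := by
  simp only [mul_add, add_mul, sum_add_distrib, ← mul_assoc]
  rw [sum_range_succ, hA, sum_range_succ' _ M, hC]
  simp only [mul_zero, zero_mul, add_zero]
  rw [← sum_add_distrib, ← sum_neg_distrib]
  refine sum_congr rfl fun k hk => ?_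
  rw [← hw k (mem_range.1 hk), Nat.add_sub_cancel]
  ring

lemma sum_racahWeight_mul_racahOp_comm (hp0 : p ≠ 0) (hp : ¬IsOfFinOrder p) (L N : ℕ)
    (f g : ℕ → ℂ) :
    ∑ k ∈ range (min L N + 1), racahWeight p L N k * racahOp p L N f k * g k =
      ∑ k ∈ range (min L N + 1), racahWeight p L N k * f k * racahOp p L N g k := by
  have hw : ∀ k < min L N, racahWeight p L N k * racahUp p L N k =
      racahWeight p L N (k + 1) * racahDown p L N (k + 1) := fun k hk =>
    racahWeight_mul_racahUp hp0 hp (lt_min_iff.1 hk).1 (lt_min_iff.1 hk).2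
  have hsum := sum_weight_mul_differenceOp (racahDown_zero p L N) (racahUp_min p L N) hw
  simp only [mul_right_comm _ (f _)]
  exact (hsum f g).trans (by simp only [mul_comm (f _ - f _)]; exact (hsum g f).symm)

lemma racahEigenvalue_mul_racahMoment (hp0 : p ≠ 0) (hp : ¬IsOfFinOrder p) {L N j : ℕ}
    (hL : j ≤ L) (hN : j ≤ N) (i : ℕ) :
    racahEigenvalue p L N j * racahMoment p L N j i =
      ∑ k ∈ range (min L N + 1),
        racahWeight p L N k * racahFun p L N j k * racahOp p L N (racahBasis p i) k := by
  rw [← sum_racahWeight_mul_racahOp_comm hp0 hp, racahMoment, mul_sum]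
  refine sum_congr rfl fun k _ => ?_
  rw [racahOp_racahFun hp0 hp hL hN]
  ring

lemma racahMoment_succ (hp0 : p ≠ 0) (hp : ¬IsOfFinOrder p) {L N j : ℕ} (hL : j ≤ L)
    (hN : j ≤ N) (i : ℕ) :
    (racahEigenvalue p L N j - racahEigenvalue p L N (i + 1)) * racahMoment p L N j (i + 1) =
      racahStep p L N i * racahMoment p L N j i := by
  rw [sub_mul, racahEigenvalue_mul_racahMoment hp0 hp hL hN, sub_eq_iff_eq_add]
  simp only [racahMoment, mul_sum, ← sum_add_distrib, racahOp_racahBasis_succ hp0 hp]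
  exact sum_congr rfl fun k _ => by ring

lemma racahMoment_eq_zero (hp0 : p ≠ 0) (hp : ¬IsOfFinOrder p) {L N j i : ℕ} (hL : j ≤ L)
    (hN : j ≤ N) (hi : i < j) : racahMoment p L N j i = 0 := by
  have hne (m : ℕ) (hm : m < j) : racahEigenvalue p L N j - racahEigenvalue p L N m ≠ 0 :=
    racahEigenvalue_sub_ne_zero hp0 hp hm.ne (by omega)
  induction i with
  | zero =>
    have heig := racahEigenvalue_mul_racahMoment hp0 hp hL hN 0
    simp only [racahOp_racahBasis_zero, mul_zero, sum_const_zero] at heig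
    refine (mul_eq_zero.1 heig).resolve_left ?_
    simpa only [racahEigenvalue_zero, sub_zero] using hne 0 hi
  | succ i ih =>
    have hsucc := racahMoment_succ hp0 hp hL hN i
    rw [ih (by omega), mul_zero] at hsucc
    exact (mul_eq_zero.1 hsucc).resolve_left (hne _ hi)

end RacahMoment

section RacahValues

variable {p : ℂ}

lemma racahCoeff_mul_racahBasis (hp0 : p ≠ 0) (hp : ¬IsOfFinOrder p) {L N j s : ℕ} (hs : s ≤ j)
    (hL : j ≤ L) (hN : j ≤ N) :
    racahCoeff p L N j s * racahBasis p s L =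
      qp p p j * qp p p (N - j) / qp p p N *
        saalschutzTerm p (p ^ ((j : ℤ) - L - N - 1)) (p ^ (L + 1)) p (p ^ (N - j + 1)) s
          (j - s) := by
  have hF := qp_self_ne_zero hp
  have hLs := qp_zpow_neg_ne_zero hp0 hp (hs.trans hL)
  have hpow : p ^ ((s.choose 2 : ℤ) - j * s) * p ^ s =
      p ^ ((s.choose 2 : ℤ) - N * s) * (p ^ (N - j + 1)) ^ s := by
    rw [← pow_mul, ← zpow_natCast, ← zpow_natCast, ← zpow_add₀ hp0, ← zpow_add₀ hp0]
    congr 1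
    push_cast [hN]
    ring
  rw [racahCoeff, racahBasis, saalschutzTerm, qp_pow_succ hp (N - j),
    show N - j + (j - s) = N - s by omega, qp_zpow_neg hp0 hp hs,
    qp_zpow_neg hp0 hp (hs.trans hN)]
  field_simp [hF]
  linear_combination
    (qp (p ^ ((j : ℤ) - L - N - 1)) p s * qp (p ^ (L + 1)) p s) * hpow

lemma racahFun_self (hp0 : p ≠ 0) (hp : ¬IsOfFinOrder p) {L N j : ℕ} (hL : j ≤ L) (hN : j ≤ N) :
    racahFun p L N j L =
      qp (p ^ (-(L : ℤ))) p j * (qp p p (L + N + 1) * qp p p (N - j)) /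
        (qp p p (L + N + 1 - j) * (qp p p j * qp p p N)) := by
  have hF := qp_self_ne_zero hp
  have hbal : p ^ ((j : ℤ) - L - N - 1) * p ^ (L + 1) * p ^ (N - j + 1) = p := by
    rw [← zpow_natCast, ← zpow_natCast, ← zpow_add₀ hp0, ← zpow_add₀ hp0]
    push_cast [hN]
    ring_nf
    exact zpow_one p
  have hax : p ^ ((j : ℤ) - L - N - 1) * p ^ (N - j + 1) = p ^ (-(L : ℤ)) := by
    rw [← zpow_natCast, ← zpow_add₀ hp0]
    congr 1
    push_cast [hN]
    ring
  have hbx : p ^ (L + 1) * p ^ (N - j + 1) = p ^ (L + N + 1 - j + 1) := by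
    rw [← pow_add]
    congr 1
    omega
  have hc (k : ℕ) : 1 - p * p ^ k ≠ 0 := by
    rw [← pow_succ']
    exact one_sub_pow_ne_zero hp k.succ_ne_zero
  have hsum := sum_antidiagonal_qSaalschutz hp0 hp hbal hc j
  rw [Nat.sum_antidiagonal_eq_sum_range_succ_mk, hax, hbx, qp_pow_succ hp,
    show L + N + 1 - j + j = L + N + 1 by omega] at hsum
  rw [racahFun, sum_congr rfl fun s hs => racahCoeff_mul_racahBasis hp0 hp
    (mem_range_succ_iff.1 hs) hL hN, ← mul_sum, hsum]
  field_simp [hF]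

lemma racahMoment_self_left (hp0 : p ≠ 0) (hp : ¬IsOfFinOrder p) {L N j : ℕ} (hL : j ≤ L)
    (hN : L ≤ N) :
    racahMoment p L N j L =
      (-1) ^ (L - j) * p ^ (L - j).choose 2 / p ^ j *
        (qp p p L * qp p p (N - j) /
          (qp p p j * qp p p (L + N + 1 - j) * qp p p N * qp p p (N - L) * qp p p (L - j))) := by
  obtain ⟨d, rfl⟩ := Nat.exists_eq_add_of_le hL
  have hF := qp_self_ne_zero hp
  have hlast : racahMoment p (j + d) N j (j + d) =
      racahWeight p (j + d) N (j + d) * racahFun p (j + d) N j (j + d) *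
        racahBasis p (j + d) (j + d) := by
    rw [racahMoment, min_eq_left hN]
    refine sum_eq_single_of_mem _ (self_mem_range_succ _) fun k hk hne => ?_
    have hlt : k < j + d := lt_of_le_of_ne (mem_range_succ_iff.1 hk) hne
    rw [racahBasis_eq_zero hp0 hlt, mul_zero]
  have hpow : p ^ (j + d) ^ 2 * p ^ (((j + d).choose 2 : ℤ) - (j + d : ℕ) * (j + d : ℕ)) *
      p ^ ((j.choose 2 : ℤ) - (j + d : ℕ) * j) * p ^ j = p ^ d.choose 2 := by
    have hchoose : ((j + d).choose 2 + j.choose 2 + j : ℤ) = d.choose 2 + j * (j + d) := by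
      rw [← Int.cast_inj (α := ℚ)]
      push_cast [Nat.cast_choose_two]
      ring
    simp only [← zpow_natCast, ← zpow_add₀ hp0]
    congr 1
    push_cast
    linear_combination hchoose
  rw [hlast, racahFun_self hp0 hp hL (hL.trans hN), racahWeight, racahBasis, qp_pow_succ hp,
    qp_zpow_neg hp0 hp hL, qp_zpow_neg hp0 hp le_rfl, show j + d - j = d by omega, ← two_mul,
    qp_self_succ, Nat.sub_self, qp_zero, ← hpow, add_comm N (j + d)]
  have hodd := one_sub_pow_ne_zero hp (2 * (j + d)).succ_ne_zero
  have hsign : (-1 : ℂ) ^ j * (-1) ^ (j + d) = (-1) ^ d := by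
    rw [pow_add, ← mul_assoc, ← mul_pow, neg_one_mul, neg_neg, one_pow, one_mul]
  rw [← hsign]
  field_simp [hF]

lemma racahMoment_pred (hp0 : p ≠ 0) (hp : ¬IsOfFinOrder p) (j d l m : ℕ) :
    p ^ d * ((1 - p ^ (j + d + 1)) ^ 2 * (1 - p ^ (l + 1)) * (1 - p ^ (m + 1))) *
        racahMoment p (j + d + l + 1) (j + d + m + 1) j (j + d) =
      -((1 - p ^ (d + 1)) * (1 - p ^ (d + l + m + 2))) *
        racahMoment p (j + d + l + 1) (j + d + m + 1) j (j + d + 1) := by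
  have hsucc := racahMoment_succ hp0 hp (L := j + d + l + 1) (N := j + d + m + 1)
    (show j ≤ _ by omega) (show j ≤ _ by omega) (j + d)
  rw [racahEigenvalue_sub hp0, racahStep,
    show ((j + d + 1 : ℕ) : ℤ) - j = (d + 1 : ℕ) by push_cast; ring, zpow_natCast,
    one_sub_zpow_of_eq_neg hp0 (m := d + (l + 1) + (m + 1)) (by push_cast; ring),
    one_sub_zpow_of_eq_neg hp0 (m := l + 1) (by push_cast; ring),
    one_sub_zpow_of_eq_neg hp0 (m := m + 1) (by push_cast; ring), pow_add p (d + _),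
    pow_add p d (l + 1)] at hsucc
  rw [show d + l + m + 2 = d + (l + 1) + (m + 1) by ring, pow_add p (d + _), pow_add p d (l + 1)]
  field_simp at hsucc
  linear_combination hsucc

lemma racahMoment_eq_of_le (hp0 : p ≠ 0) (hp : ¬IsOfFinOrder p) {L N j d : ℕ} (hL : j + d ≤ L)
    (hN : L ≤ N) :
    racahMoment p L N j (j + d) =
      (-1) ^ d * p ^ d.choose 2 / p ^ j *
        (qp p p (j + d) ^ 2 * qp p p (L + N - j - (j + d)) /
          (qp p p j * qp p p (L + N + 1 - j) * qp p p L * qp p p N * qp p p (L - (j + d)) *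
            qp p p (N - (j + d)) * qp p p d)) := by
  have hF := qp_self_ne_zero hp
  obtain ⟨l, hl⟩ := Nat.exists_eq_add_of_le hL
  induction l generalizing d with
  | zero =>
    obtain rfl : L = j + d := hl
    rw [racahMoment_self_left hp0 hp (by omega) hN, show j + d - j = d by omega,
      show j + d + N - j - (j + d) = N - j by omega, Nat.sub_self, qp_zero]
    field_simp [hF]
  | succ l ih =>
    obtain ⟨m, rfl⟩ := Nat.exists_eq_add_of_lt (show j + d < N by omega)
    obtain rfl : L = j + d + l + 1 := hl
    have hpred := racahMoment_pred hp0 hp j d l m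
    rw [show racahMoment p _ _ j (j + d + 1) = _ from ih (d := d + 1) (by omega) (by omega)]
      at hpred
    have hone (a : ℕ) := one_sub_pow_ne_zero hp a.succ_ne_zero
    have hjd := hone (j + d)
    have hl := hone l
    have hm := hone m
    have hd := hone d
    refine mul_left_cancel₀ (mul_ne_zero (pow_ne_zero d hp0)
      (mul_ne_zero (mul_ne_zero (pow_ne_zero 2 hjd) hl) hm)) (hpred.trans ?_)
    rw [show j + d + l + 1 - (j + (d + 1)) = l by omega,
      show j + d + m + 1 - (j + (d + 1)) = m by omega,
      show j + d + l + 1 - (j + d) = l + 1 by omega, show j + d + m + 1 - (j + d) = m + 1 by omega,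
      show j + d + l + 1 + (j + d + m + 1) - j - (j + (d + 1)) = d + l + m + 1 by omega,
      show j + d + l + 1 + (j + d + m + 1) - j - (j + d) = d + l + m + 1 + 1 by omega,
      ← add_assoc j d 1, qp_self_succ p (j + d), qp_self_succ p l, qp_self_succ p m,
      qp_self_succ p d, qp_self_succ p (d + l + m + 1), Nat.choose_succ_succ' d 1,
      Nat.choose_one_right]
    field_simp [hF]
    ring

lemma racahMoment_eq (hp0 : p ≠ 0) (hp : ¬IsOfFinOrder p) {L N j d : ℕ} (hL : j + d ≤ L)
    (hN : j + d ≤ N) :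
    racahMoment p L N j (j + d) =
      (-1) ^ d * p ^ d.choose 2 / p ^ j *
        (qp p p (j + d) ^ 2 * qp p p (L + N - j - (j + d)) /
          (qp p p j * qp p p (L + N + 1 - j) * qp p p L * qp p p N * qp p p (L - (j + d)) *
            qp p p (N - (j + d)) * qp p p d)) := by
  rcases le_total L N with h | h
  · exact racahMoment_eq_of_le hp0 hp hL h
  · rw [racahMoment_comm, racahMoment_eq_of_le hp0 hp hN h, add_comm N L]
    ring

end RacahValues

section LaurentEvaluation

open Filter Topology

/-- Evaluation of `f` in the coordinate `z` with `x = (z + z⁻¹) / 2`, that is `x = cos θ` for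
`z = e ^ (iθ)`. -/
def laurentEval (f : ℂ[X]) (z : ℂ) : ℂ := f.eval ((z + z⁻¹) / 2)

@[simp]
lemma laurentEval_zero (z : ℂ) : laurentEval 0 z = 0 := eval_zero

@[simp]
lemma laurentEval_add (f g : ℂ[X]) (z : ℂ) :
    laurentEval (f + g) z = laurentEval f z + laurentEval g z := eval_add

@[simp]
lemma laurentEval_mul (f g : ℂ[X]) (z : ℂ) :
    laurentEval (f * g) z = laurentEval f z * laurentEval g z := eval_mul

@[simp]
lemma laurentEval_C (c z : ℂ) : laurentEval (C c) z = c := eval_C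

@[simp]
lemma laurentEval_comp_neg_X (f : ℂ[X]) (z : ℂ) :
    laurentEval (f.comp (-X)) z = laurentEval f (-z) := by
  simp only [laurentEval, eval_comp, eval_neg, eval_X, inv_neg]
  ring_nf

lemma laurentEval_inv (f : ℂ[X]) (z : ℂ) : laurentEval f z⁻¹ = laurentEval f z := by
  rw [laurentEval, laurentEval, inv_inv, add_comm]

lemma exists_ne_zero_add_inv_div_two_eq (x : ℂ) : ∃ z ≠ 0, (z + z⁻¹) / 2 = x := by
  obtain ⟨s, hs⟩ := IsAlgClosed.exists_eq_mul_self (x ^ 2 - 1)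
  have hinv : (x + s) * (x - s) = 1 := by linear_combination hs
  have hz : x + s ≠ 0 := left_ne_zero_of_mul_eq_one hinv
  refine ⟨x + s, hz, ?_⟩
  rw [inv_eq_of_mul_eq_one_right hinv]
  ring

lemma ext_laurentEval {f g : ℂ[X]} (h : ∀ z ≠ 0, laurentEval f z = laurentEval g z) : f = g :=
  Polynomial.funext fun x => by
    obtain ⟨z, hz, rfl⟩ := exists_ne_zero_add_inv_div_two_eq x
    exact h z hz

lemma tendsto_pow_mul_laurentEval {f : ℂ[X]} {e : ℕ} (hf : f.natDegree ≤ e) {c : ℂ}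
    (hc : c ≠ 0) :
    Tendsto (fun w => w ^ e * laurentEval f (c * w⁻¹)) (𝓝[≠] 0)
      (𝓝 (f.coeff e * (c / 2) ^ e)) := by
  set h : ℂ → ℂ := fun w =>
    ∑ m ∈ range (e + 1), f.coeff m * ((c + w ^ 2 / c) / 2) ^ m * w ^ (e - m) with h_def
  have h_zero : h 0 = f.coeff e * (c / 2) ^ e := by
    rw [h_def]
    simp only
    rw [sum_range_succ, sum_eq_zero fun m hm => by
      rw [zero_pow (Nat.sub_ne_zero_of_lt (mem_range.1 hm)), mul_zero]]
    simp
  have h_cont : Continuous h := by fun_prop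
  rw [← h_zero]
  refine ((h_cont.tendsto 0).mono_left nhdsWithin_le_nhds).congr' ?_
  filter_upwards [self_mem_nhdsWithin] with w (hw : w ≠ 0)
  rw [laurentEval, eval_eq_sum_range' (Nat.lt_succ_of_le hf), mul_sum]
  refine sum_congr rfl fun m hm => ?_
  have harg : (c + w ^ 2 / c) / 2 = w * ((c * w⁻¹ + (c * w⁻¹)⁻¹) / 2) := by field_simp
  rw [harg, mul_pow, ← pow_mul_pow_sub w (Nat.lt_succ_iff.1 (mem_range.1 hm))]
  ring

end LaurentEvaluation

section Ultraspherical

/-- The coefficient `(β;p)_r / (p;p)_r` of the q-binomial series, from which the continuous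
q-ultraspherical polynomials are built. -/
def ultraCoeff (p β : ℂ) (r : ℕ) : ℂ := qp β p r / qp p p r

lemma ultraCoeff_zero (p β : ℂ) : ultraCoeff p β 0 = 1 := by simp [ultraCoeff, qp_zero]

lemma ultraCoeff_succ {p : ℂ} (hp : ¬IsOfFinOrder p) (β : ℂ) (r : ℕ) :
    ultraCoeff p β (r + 1) * (1 - p ^ (r + 1)) = ultraCoeff p β r * (1 - β * p ^ r) := by
  have := qp_self_ne_zero hp r
  have := one_sub_pow_ne_zero hp r.succ_ne_zero
  rw [ultraCoeff, ultraCoeff, qp_self_succ, qp_succ]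
  field_simp

/-- The Laurent sum of the continuous q-ultraspherical polynomial of degree `m`, its terms
weighted by `φ`. -/
def ultraSum (p β : ℂ) (m : ℕ) (φ : ℕ → ℕ → ℂ) (z : ℂ) : ℂ :=
  ∑ x ∈ antidiagonal m,
    φ x.1 x.2 * (ultraCoeff p β x.1 * ultraCoeff p β x.2 * z ^ ((x.2 : ℤ) - x.1))

variable {p β z : ℂ} {m : ℕ}

lemma ultraSum_congr {φ ψ : ℕ → ℕ → ℂ} (h : ∀ r s, r + s = m → φ r s = ψ r s) :
    ultraSum p β m φ z = ultraSum p β m ψ z :=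
  sum_congr rfl fun x hx => by rw [h x.1 x.2 (mem_antidiagonal.1 hx)]

lemma ultraSum_sub (φ ψ : ℕ → ℕ → ℂ) :
    ultraSum p β m (fun r s => φ r s - ψ r s) z = ultraSum p β m φ z - ultraSum p β m ψ z := by
  simp only [ultraSum, sub_mul, sum_sub_distrib]

lemma ultraSum_const_mul (c : ℂ) (φ : ℕ → ℕ → ℂ) :
    ultraSum p β m (fun r s => c * φ r s) z = c * ultraSum p β m φ z := by
  simp only [ultraSum, mul_sum, mul_assoc]

lemma ultraSum_succ_right (hp : ¬IsOfFinOrder p) (hz : z ≠ 0) (φ : ℕ → ℕ → ℂ) :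
    ultraSum p β (m + 1) (fun r s => φ r s * (1 - p ^ s)) z =
      z * ultraSum p β m (fun r s => φ r (s + 1) * (1 - β * p ^ s)) z := by
  rw [ultraSum, Nat.sum_antidiagonal_succ', ultraSum, mul_sum]
  simp only [pow_zero, sub_self, mul_zero, zero_mul, zero_add]
  refine sum_congr rfl fun ⟨r, s⟩ _ => ?_
  have hpow : z ^ (((s + 1 : ℕ) : ℤ) - r) = z ^ ((s : ℤ) - r) * z := by
    rw [← zpow_add_one₀ hz, Nat.cast_succ, sub_add_eq_add_sub]
  linear_combination φ r (s + 1) * ultraCoeff p β r *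
    (z ^ ((s : ℤ) - r) * z * ultraCoeff_succ hp β s +
      ultraCoeff p β (s + 1) * (1 - p ^ (s + 1)) * hpow)

lemma ultraSum_inv (φ : ℕ → ℕ → ℂ) :
    ultraSum p β m φ z⁻¹ = ultraSum p β m (fun r s => φ s r) z := by
  rw [ultraSum, ← Nat.sum_antidiagonal_swap, ultraSum]
  refine sum_congr rfl fun ⟨r, s⟩ _ => ?_
  rw [Prod.swap_prod_mk, _root_.inv_zpow, ← _root_.zpow_neg, neg_sub,
    mul_comm (ultraCoeff p β s)]

lemma ultraSum_succ_left (hp : ¬IsOfFinOrder p) (hz : z ≠ 0) (φ : ℕ → ℕ → ℂ) :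
    z * ultraSum p β (m + 1) (fun r s => φ r s * (1 - p ^ r)) z =
      ultraSum p β m (fun r s => φ (r + 1) s * (1 - β * p ^ r)) z := by
  have hsucc := ultraSum_succ_right (β := β) (m := m) hp (inv_ne_zero hz) fun r s => φ s r
  rw [ultraSum_inv, ultraSum_inv] at hsucc
  rw [hsucc, mul_inv_cancel_left₀ hz]

variable {C : ℂ → ℂ → ℕ → ℂ[X]}

lemma IsUltra.natDegree_le (hC : IsUltra C) (p β : ℂ) (m : ℕ) : (C p β m).natDegree ≤ m :=
  natDegree_le_of_degree_le (hC p β m).1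

lemma IsUltra.laurentEval_eq (hC : IsUltra C) (p β : ℂ) (m : ℕ) (hz : z ≠ 0) :
    laurentEval (C p β m) z = ultraSum p β m (fun _ _ => 1) z := by
  rw [laurentEval, (hC p β m).2 z hz, ultraSum, Nat.sum_antidiagonal_eq_sum_range_succ_mk]
  refine sum_congr rfl fun r hr => ?_
  rw [Nat.cast_sub (Nat.lt_succ_iff.1 (mem_range.1 hr)), one_mul, ultraCoeff, ultraCoeff,
    mul_div_mul_comm, sub_sub, ← two_mul]

lemma IsUltra.eq_one (hC : IsUltra C) (p β : ℂ) : C p β 0 = 1 :=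
  ext_laurentEval fun z hz => by
    rw [hC.laurentEval_eq p β 0 hz, ← C_1, laurentEval_C]
    simp [ultraSum, ultraCoeff_zero]

lemma IsUltra.coeff_self (hC : IsUltra C) (p β : ℂ) (m : ℕ) :
    (C p β m).coeff m = 2 ^ m * ultraCoeff p β m := by
  have hcont : Continuous fun w : ℂ =>
      ∑ x ∈ antidiagonal m, ultraCoeff p β x.1 * ultraCoeff p β x.2 * w ^ (2 * x.1) := by fun_prop
  have hlim := ((hcont.tendsto 0).mono_left nhdsWithin_le_nhds).congr'
    (f₂ := fun w => w ^ m * laurentEval (C p β m) (1 * w⁻¹)) (by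
      filter_upwards [self_mem_nhdsWithin] with w (hw : w ≠ 0)
      rw [one_mul, hC.laurentEval_eq p β m (inv_ne_zero hw), ultraSum, mul_sum]
      refine sum_congr rfl fun ⟨r, s⟩ hrs => ?_
      have hpow : w ^ m * w⁻¹ ^ ((s : ℤ) - r) = w ^ (2 * r) := by
        rw [← mem_antidiagonal.1 hrs, _root_.inv_zpow, ← _root_.zpow_neg, ← zpow_natCast,
          ← zpow_natCast, ← zpow_add₀ hw]
        congr 1
        push_cast
        ring
      linear_combination -(ultraCoeff p β r * ultraCoeff p β s) * hpow)
  have hcoeff := tendsto_nhds_unique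
    (tendsto_pow_mul_laurentEval (hC.natDegree_le p β m) one_ne_zero) hlim
  have hsum : ∑ x ∈ antidiagonal m,
      ultraCoeff p β x.1 * ultraCoeff p β x.2 * (0 : ℂ) ^ (2 * x.1) = ultraCoeff p β m := by
    rw [sum_eq_single_of_mem (0, m) (by simp)]
    · simp [ultraCoeff_zero]
    · rintro ⟨r, s⟩ hrs hne
      have hr : r ≠ 0 := by
        rintro rfl
        exact hne (by simpa using hrs)
      simp [hr]
  rw [hsum, one_div, inv_pow] at hcoeff
  rw [← hcoeff]
  field_simp

lemma IsUltra.comp_neg_X (hC : IsUltra C) (p β : ℂ) (m : ℕ) :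
    (C p β m).comp (-X) = Polynomial.C ((-1) ^ m) * C p β m := by
  refine ext_laurentEval fun z hz => ?_
  rw [laurentEval_comp_neg_X, laurentEval_mul, laurentEval_C, hC.laurentEval_eq p β m hz,
    hC.laurentEval_eq p β m (neg_ne_zero.2 hz), ultraSum, ultraSum, mul_sum]
  refine sum_congr rfl fun ⟨r, s⟩ hrs => ?_
  have hsign : (-z) ^ ((s : ℤ) - r) = (-1) ^ m * z ^ ((s : ℤ) - r) := by
    rw [neg_eq_neg_one_mul, mul_zpow, zpow_sub₀ (neg_ne_zero.2 one_ne_zero), zpow_natCast,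
      zpow_natCast, ← mem_antidiagonal.1 hrs, pow_add]
    rcases neg_one_pow_eq_or ℂ r with hr | hr <;> rw [hr] <;> ring
  rw [hsign]
  ring

variable {q : ℂ}

lemma IsUltra.pow_mul_laurentEval_mul (hC : IsUltra C) (hq : q ≠ 0) (β : ℂ) (m : ℕ) (hz : z ≠ 0) :
    q ^ m * laurentEval (C (q ^ 2) β m) (q * z) =
      ultraSum (q ^ 2) β m (fun _ s => (q ^ 2) ^ s) z := by
  rw [hC.laurentEval_eq _ _ _ (mul_ne_zero hq hz), ultraSum, ultraSum, mul_sum]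
  refine sum_congr rfl fun ⟨r, s⟩ hrs => ?_
  have hpow : q ^ m * q ^ ((s : ℤ) - r) = (q ^ 2) ^ s := by
    rw [← mem_antidiagonal.1 hrs, ← pow_mul, ← zpow_natCast, ← zpow_natCast, ← zpow_add₀ hq]
    congr 1
    push_cast
    ring
  rw [mul_zpow, ← hpow]
  ring

lemma IsUltra.pow_mul_laurentEval_inv_mul (hC : IsUltra C) (hq : q ≠ 0) (β : ℂ) (m : ℕ)
    (hz : z ≠ 0) :
    q ^ m * laurentEval (C (q ^ 2) β m) (q⁻¹ * z) =
      ultraSum (q ^ 2) β m (fun r _ => (q ^ 2) ^ r) z := by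
  have h := hC.pow_mul_laurentEval_mul hq β m (inv_ne_zero hz)
  rwa [ultraSum_inv, ← laurentEval_inv, mul_inv, inv_inv] at h

/-- Elimination of `C_m(z)` from the two relations given by the recurrence of `ultraCoeff` in each
of the two summation indices. -/
lemma IsUltra.laurentEval_succ_mul (hC : IsUltra C) (hq : q ≠ 0) (hq' : ¬IsOfFinOrder (q ^ 2))
    (β : ℂ) (m : ℕ) (hz : z ≠ 0) :
    (β * (q ^ 2) ^ m - z ^ 2) * q * laurentEval (C (q ^ 2) β (m + 1)) (q * z) +
        z * (1 - β ^ 2 * (q ^ 2) ^ m) * laurentEval (C (q ^ 2) β m) (q * z) =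
      q ^ m * (β - q ^ 2 * z ^ 2) * laurentEval (C (q ^ 2) β (m + 1)) z := by
  have hleft := ultraSum_succ_left (β := β) (m := m) hq' hz fun _ s => (q ^ 2) ^ s
  have hright := ultraSum_succ_right (β := β) (m := m) hq' hz fun _ _ => 1
  have hl₁ : ∀ k, ∀ r s, r + s = k →
      (q ^ 2) ^ s * (1 - (q ^ 2) ^ r) = (q ^ 2) ^ s - (q ^ 2) ^ k * 1 := by
    rintro _ r s rfl
    ring
  have hl₂ : ∀ r s, r + s = m →
      (q ^ 2) ^ s * (1 - β * (q ^ 2) ^ r) = (q ^ 2) ^ s - β * (q ^ 2) ^ m * 1 := by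
    rintro r s rfl
    ring
  rw [ultraSum_congr (hl₁ _), ultraSum_congr hl₂] at hleft
  simp only [one_mul, ultraSum_sub, ultraSum_const_mul] at hleft hright
  rw [← hC.laurentEval_eq _ _ _ hz, ← hC.pow_mul_laurentEval_mul hq _ _ hz,
    ← hC.pow_mul_laurentEval_mul hq _ _ hz, ← hC.laurentEval_eq _ _ _ hz] at hleft hright
  refine mul_left_cancel₀ (pow_ne_zero m hq) ?_
  linear_combination -z * hleft - β * (q ^ 2) ^ m * hright

lemma IsUltra.laurentEval_succ_inv_mul (hC : IsUltra C) (hq : q ≠ 0) (hq' : ¬IsOfFinOrder (q ^ 2))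
    (β : ℂ) (m : ℕ) (hz : z ≠ 0) :
    (β * (q ^ 2) ^ m * z ^ 2 - 1) * q * laurentEval (C (q ^ 2) β (m + 1)) (q⁻¹ * z) +
        z * (1 - β ^ 2 * (q ^ 2) ^ m) * laurentEval (C (q ^ 2) β m) (q⁻¹ * z) =
      q ^ m * (β * z ^ 2 - q ^ 2) * laurentEval (C (q ^ 2) β (m + 1)) z := by
  have h := hC.laurentEval_succ_mul hq hq' β m (inv_ne_zero hz)
  have harg : q * z⁻¹ = (q⁻¹ * z)⁻¹ := by rw [mul_inv, inv_inv]
  rw [harg, laurentEval_inv, laurentEval_inv, laurentEval_inv] at h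
  refine mul_left_cancel₀ (pow_ne_zero 2 (inv_ne_zero hz)) ?_
  have hinv := inv_mul_cancel₀ hz
  linear_combination h + ((z⁻¹ * z + 1) * β *
    ((q ^ 2) ^ m * q * laurentEval (C (q ^ 2) β (m + 1)) (q⁻¹ * z) -
      q ^ m * laurentEval (C (q ^ 2) β (m + 1)) z) +
    z⁻¹ * (1 - β ^ 2 * (q ^ 2) ^ m) * laurentEval (C (q ^ 2) β m) (q⁻¹ * z)) * hinv

lemma IsUltra.qDifference_eq (hC : IsUltra C) (hq : q ≠ 0) (hq' : ¬IsOfFinOrder (q ^ 2))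
    (β : ℂ) (m : ℕ) (hz : z ≠ 0) :
    (1 - β * z ^ 2) * laurentEval (C (q ^ 2) β m) (q * z) +
        (β - z ^ 2) * laurentEval (C (q ^ 2) β m) (q⁻¹ * z) =
      (1 - z ^ 2) * ((q ^ m)⁻¹ + β * q ^ m) * laurentEval (C (q ^ 2) β m) z := by
  have hshift : ultraSum (q ^ 2) β m (fun r s => (1 - β * (q ^ 2) ^ r) * (1 - (q ^ 2) ^ s)) z =
      z ^ 2 * ultraSum (q ^ 2) β m (fun r s => (1 - β * (q ^ 2) ^ s) * (1 - (q ^ 2) ^ r)) z := by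
    cases m with
    | zero => simp [ultraSum]
    | succ m =>
      rw [ultraSum_succ_right hq' hz, sq z, mul_assoc z z, ultraSum_succ_left hq' hz]
      simp only [mul_comm]
  have hr : ∀ r s, r + s = m → (1 - β * (q ^ 2) ^ r) * (1 - (q ^ 2) ^ s) =
      (1 + β * (q ^ 2) ^ m) * 1 - β * (q ^ 2) ^ r - (q ^ 2) ^ s := by
    rintro r s rfl
    ring
  have hs : ∀ r s, r + s = m → (1 - β * (q ^ 2) ^ s) * (1 - (q ^ 2) ^ r) =
      (1 + β * (q ^ 2) ^ m) * 1 - β * (q ^ 2) ^ s - (q ^ 2) ^ r := by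
    rintro r s rfl
    ring
  rw [ultraSum_congr hr, ultraSum_congr hs] at hshift
  simp only [ultraSum_sub, ultraSum_const_mul] at hshift
  rw [← hC.laurentEval_eq _ _ _ hz, ← hC.pow_mul_laurentEval_mul hq _ _ hz,
    ← hC.pow_mul_laurentEval_inv_mul hq _ _ hz] at hshift
  refine mul_left_cancel₀ (pow_ne_zero m hq) ?_
  have hqm := mul_inv_cancel₀ (pow_ne_zero m hq)
  linear_combination -hshift - (1 - z ^ 2) * laurentEval (C (q ^ 2) β m) z * hqm

end Ultraspherical

section QDifferenceRelation

open Filter Topology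

/-- The first-order q-difference relation coupling two polynomials `f`, `g` in consecutive rows
of a column of `P_n`: a row of the matrix equation `D₁ P_n = P_n Λ_n(1)`, in which the
eigenvalue is proportional to `a + b` and the coefficients depend on `a * b` only. -/
def QDiffRelated (q a b : ℂ) (f g : ℂ[X]) : Prop :=
  ∀ z ≠ 0, (1 - a * b * z ^ 2) * laurentEval f (q * z) +
      (a * b - z ^ 2) * laurentEval f (q⁻¹ * z) -
      (1 - a * b) * z * (laurentEval g (q * z) - laurentEval g (q⁻¹ * z)) =
    (a + b) * (1 - z ^ 2) * laurentEval f z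

namespace QDiffRelated

variable {q a b : ℂ} {f g : ℂ[X]}

lemma zero (q a b : ℂ) : QDiffRelated q a b 0 0 := fun z _ => by simp

lemma add {f' g' : ℂ[X]} (h : QDiffRelated q a b f g) (h' : QDiffRelated q a b f' g') :
    QDiffRelated q a b (f + f') (g + g') := fun z hz => by
  simp only [laurentEval_add]
  linear_combination h z hz + h' z hz

lemma sum {ι : Type*} {s : Finset ι} {F G : ι → ℂ[X]}
    (h : ∀ k ∈ s, QDiffRelated q a b (F k) (G k)) :
    QDiffRelated q a b (∑ k ∈ s, F k) (∑ k ∈ s, G k) := by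
  classical
  induction s using Finset.induction_on with
  | empty => exact zero q a b
  | insert k s hk ih =>
    rw [sum_insert hk, sum_insert hk]
    exact (h k (mem_insert_self k s)).add (ih fun l hl => h l (mem_insert_of_mem hl))

/-- Comparison of the coefficients of `z ^ (e + 2)` as `z → ∞`. -/
lemma coeff_eq (hq : q ≠ 0) (h : QDiffRelated q a b f g) {e : ℕ} (hf : f.natDegree ≤ e)
    (hg : g.natDegree ≤ e + 1) :
    2 * q * (1 - a * q ^ e) * (1 - b * q ^ e) * f.coeff e =
      (1 - a * b) * (1 - q ^ (2 * (e + 1))) * g.coeff (e + 1) := by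
  have hsq : Tendsto (fun w : ℂ => w ^ 2) (𝓝[≠] 0) (𝓝 0) := by
    have := ((continuous_pow 2).tendsto (0 : ℂ)).mono_left (nhdsWithin_le_nhds (s := {0}ᶜ))
    rwa [zero_pow two_ne_zero] at this
  have hfc {c : ℂ} (hc : c ≠ 0) := tendsto_pow_mul_laurentEval hf hc
  have hgc {c : ℂ} (hc : c ≠ 0) := tendsto_pow_mul_laurentEval hg hc
  have hleft := ((((hsq.sub_const (a * b)).mul (hfc hq)).add
    (((hsq.const_mul (a * b)).sub_const 1).mul (hfc (inv_ne_zero hq)))).sub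
    (((hgc hq).sub (hgc (inv_ne_zero hq))).const_mul (1 - a * b)))
  have hright := ((hsq.sub_const 1).const_mul (a + b)).mul (hfc one_ne_zero)
  have hlim := tendsto_nhds_unique_of_eventuallyEq hleft hright (by
    filter_upwards [self_mem_nhdsWithin] with w (hw : w ≠ 0)
    have hinv : w ^ 2 * w⁻¹ ^ 2 = 1 := by rw [← mul_pow, mul_inv_cancel₀ hw, one_pow]
    have hinv' : w ^ 2 * w⁻¹ = w := by rw [sq, mul_assoc, mul_inv_cancel₀ hw, mul_one]
    have hw' := h w⁻¹ (inv_ne_zero hw)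
    rw [one_mul]
    linear_combination w ^ (e + 2) * hw' + w ^ e * (a * b * laurentEval f (q * w⁻¹) +
      laurentEval f (q⁻¹ * w⁻¹) - (a + b) * laurentEval f w⁻¹) * hinv +
      w ^ e * (1 - a * b) * (laurentEval g (q * w⁻¹) - laurentEval g (q⁻¹ * w⁻¹)) * hinv')
  have hqe : q ^ e ≠ 0 := pow_ne_zero e hq
  simp only [div_pow, inv_pow, one_pow, pow_succ, pow_mul'] at hlim ⊢
  field_simp at hlim
  linear_combination -hlim

lemma degree_lt (hq : q ≠ 0) (h : QDiffRelated q a b f g) (hf : f ≠ 0)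
    (ha : 1 - a * q ^ f.natDegree ≠ 0) (hb : 1 - b * q ^ f.natDegree ≠ 0) :
    f.degree < g.degree := by
  refine degree_lt_degree (lt_of_not_ge fun hle => ?_)
  have hcoeff := h.coeff_eq hq le_rfl (Nat.le_succ_of_le hle)
  rw [coeff_eq_zero_of_natDegree_lt (Nat.lt_succ_of_le hle), mul_zero] at hcoeff
  exact mul_ne_zero (mul_ne_zero (mul_ne_zero (mul_ne_zero two_ne_zero hq) ha) hb)
    (leadingCoeff_ne_zero.2 hf) hcoeff

/-- The relations for `A` and `A'` replace both shifts of `A` by `A` itself, with coefficients for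
which the shifts of `B` combine into its second-order equation. -/
lemma C_mul_mul {c c' P P' r s κ : ℂ} {A A' B : ℂ[X]} (hab : a * b = P) (hrs : r * s = a + b)
    (hc : c' * (1 - P) = -(c * κ))
    (hA : ∀ z ≠ 0, (1 - P * z ^ 2) * laurentEval A (q * z) + κ * z * laurentEval A' (q * z) =
      r * (1 - P' * z ^ 2) * laurentEval A z)
    (hA' : ∀ z ≠ 0, (P - z ^ 2) * laurentEval A (q⁻¹ * z) - κ * z * laurentEval A' (q⁻¹ * z) =
      r * (P' - z ^ 2) * laurentEval A z)
    (hB : ∀ z ≠ 0, (1 - P' * z ^ 2) * laurentEval B (q * z) +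
      (P' - z ^ 2) * laurentEval B (q⁻¹ * z) = (1 - z ^ 2) * s * laurentEval B z) :
    QDiffRelated q a b (Polynomial.C c * (A * B)) (Polynomial.C c' * (A' * B)) := by
  intro z hz
  simp only [laurentEval_mul, laurentEval_C, hab, ← hrs]
  linear_combination c * laurentEval B (q * z) * hA z hz +
    c * laurentEval B (q⁻¹ * z) * hA' z hz + c * r * laurentEval A z * hB z hz -
    z * (laurentEval A' (q * z) * laurentEval B (q * z) -
      laurentEval A' (q⁻¹ * z) * laurentEval B (q⁻¹ * z)) * hc

end QDiffRelated

end QDifferenceRelation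

section Entries

/-- The scalar factor of the `k`-th summand of the entry of `P_n` in row `i` and column `j`. -/
def pmCoeff (q : ℂ) (L n i j k : ℕ) : ℂ :=
  (-1 : ℂ) ^ k *
    q ^ ((n : ℤ) + (2 * (k : ℤ) + 1) * ((k : ℤ) - (i : ℤ)) + (j : ℤ) * (2 * (k : ℤ) + 1) +
        2 * (k : ℤ) * ((L : ℤ) + (n : ℤ) + 1) - (k : ℤ) ^ 2) *
    (qp (q ^ 2) (q ^ 2) k * qp (q ^ 2) (q ^ 2) (k + i) /
      (qp (q ^ 2) (q ^ 2) (2 * k) * qp (q ^ 2) (q ^ 2) i)) *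
    (qp (q ^ (-(2 * (L : ℤ)))) (q ^ 2) k * qp (q ^ (-(2 * (j : ℤ) + 2 * (n : ℤ)))) (q ^ 2) k /
      (qp (q ^ 2) (q ^ 2) k * qp (q ^ (2 * (L : ℤ) + 4)) (q ^ 2) k)) *
    (qp (q ^ 2) (q ^ 2) (n + j - k) / qp (q ^ (4 * (k : ℤ) + 4)) (q ^ 2) (n + j - k)) *
    qRacah (q ^ 2) 1 1 (q ^ (-(2 * (n : ℤ) + 2 * (j : ℤ) + 2))) (q ^ (-(2 * (L : ℤ) + 2))) k j

/-- The `k`-th summand of the entry of `P_n` in row `i` and column `j`, extended by zero to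
`k < i`. -/
def pmTerm (q : ℂ) (L : ℕ) (C : ℂ → ℂ → ℕ → ℂ[X]) (n i j k : ℕ) : ℂ[X] :=
  if i ≤ k then
    Polynomial.C (pmCoeff q L n i j k) *
      (C (q ^ 2) (q ^ (-(2 * (k : ℤ)))) (k - i) * C (q ^ 2) (q ^ (2 * (k : ℤ) + 2)) (n + j - k))
  else 0

/-- The entry of `P_n` in row `i` and column `j`, for arbitrary natural numbers `i` and `j`. -/
def pmEntry (q : ℂ) (L : ℕ) (C : ℂ → ℂ → ℕ → ℂ[X]) (n i j : ℕ) : ℂ[X] :=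
  ∑ k ∈ range (min L (n + j) + 1), pmTerm q L C n i j k

lemma Pm_apply (q : ℂ) (L : ℕ) (C : ℂ → ℂ → ℕ → ℂ[X]) (n : ℕ) (i j : Fin (L + 1)) :
    Pm q L C n i j = pmEntry q L C n i j := by
  have hrange : Icc (i : ℕ) (min L (n + j)) = {k ∈ range (min L (n + j) + 1) | (i : ℕ) ≤ k} := by
    ext k
    simp only [mem_Icc, mem_filter, mem_range]
    omega
  simp only [Pm, Matrix.of_apply, hrange, sum_filter]
  rfl

variable {q : ℂ} {C : ℂ → ℂ → ℕ → ℂ[X]}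

lemma pmCoeff_succ (hq : q ≠ 0) (hq' : ¬IsOfFinOrder (q ^ 2)) (L n i j k : ℕ) :
    pmCoeff q L n (i + 1) j k * (1 - (q ^ 2) ^ (i + 1)) * q =
      pmCoeff q L n i j k * (q ^ (-(2 * (k : ℤ))) - (q ^ 2) ^ (i + 1)) := by
  have hpow (x : ℤ) : q ^ (x + (2 * (k : ℤ) + 1) * ((k : ℤ) - ((i + 1 : ℕ) : ℤ))) =
      q ^ (x + (2 * (k : ℤ) + 1) * ((k : ℤ) - (i : ℤ))) * q ^ (-(2 * (k : ℤ))) * q⁻¹ := by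
    rw [← _root_.zpow_neg_one, ← zpow_add₀ hq, ← zpow_add₀ hq]
    congr 1
    push_cast
    ring
  have hk : q ^ (-(2 * (k : ℤ))) * (q ^ 2) ^ k = 1 := by
    rw [← pow_mul, ← zpow_natCast, ← zpow_add₀ hq, Nat.cast_mul, Nat.cast_two, neg_add_cancel,
      zpow_zero]
  have hF := qp_self_ne_zero hq' i
  have hone := one_sub_pow_ne_zero hq' i.succ_ne_zero
  have hfac : qp (q ^ 2) (q ^ 2) (k + (i + 1)) / (qp (q ^ 2) (q ^ 2) (i + 1)) *
      (1 - (q ^ 2) ^ (i + 1)) =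
      qp (q ^ 2) (q ^ 2) (k + i) / qp (q ^ 2) (q ^ 2) i *
        (1 - (q ^ 2) ^ k * (q ^ 2) ^ (i + 1)) := by
    rw [← add_assoc, qp_self_succ, qp_self_succ, add_assoc k, pow_add]
    field_simp
  have hexp : ∀ x, (n : ℤ) + x + (j : ℤ) * (2 * (k : ℤ) + 1) +
      2 * (k : ℤ) * ((L : ℤ) + (n : ℤ) + 1) - (k : ℤ) ^ 2 =
      ((n : ℤ) + (j : ℤ) * (2 * (k : ℤ) + 1) +
      2 * (k : ℤ) * ((L : ℤ) + (n : ℤ) + 1) - (k : ℤ) ^ 2) + x := fun x => by ring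
  simp only [pmCoeff, hexp, hpow, mul_div_mul_comm]
  have hcancel (S Z w A φ ψ B D R P u : ℂ) (hφ : φ * (1 - P) = ψ * (1 - u * P))
      (hw : w * u = 1) : S * (Z * w * q⁻¹) * (A * φ) * B * D * R * (1 - P) * q =
        S * Z * (A * ψ) * B * D * R * (w - P) := by
    linear_combination S * Z * w * A * B * D * R * q⁻¹ * q * hφ -
      S * Z * A * ψ * B * D * R * P * q⁻¹ * q * hw +
      S * Z * A * ψ * B * D * R * (w - P) * inv_mul_cancel₀ hq
  exact hcancel _ _ _ _ _ _ _ _ _ _ _ hfac hk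

lemma IsUltra.laurentEval_neg_succ_mul (hC : IsUltra C) (hq : q ≠ 0) (hq' : ¬IsOfFinOrder (q ^ 2))
    (i m : ℕ) {z : ℂ} (hz : z ≠ 0) :
    (1 - (q ^ 2) ^ (i + 1) * z ^ 2) *
          laurentEval (C (q ^ 2) (q ^ (-(2 * ((i + m + 1 : ℕ) : ℤ)))) (m + 1)) (q * z) +
        q⁻¹ * ((q ^ 2) ^ (i + 1) - q ^ (-(2 * ((i + m + 1 : ℕ) : ℤ)))) * z *
          laurentEval (C (q ^ 2) (q ^ (-(2 * ((i + m + 1 : ℕ) : ℤ)))) m) (q * z) =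
      (q ^ (m + 1))⁻¹ * (1 - (q ^ 2) ^ (i + m + 2) * z ^ 2) *
        laurentEval (C (q ^ 2) (q ^ (-(2 * ((i + m + 1 : ℕ) : ℤ)))) (m + 1)) z := by
  have h := hC.laurentEval_succ_mul hq hq' (q ^ (-(2 * ((i + m + 1 : ℕ) : ℤ)))) m hz
  have hparam : q ^ (-(2 * ((i + m + 1 : ℕ) : ℤ))) = ((q ^ 2) ^ (i + 1) * (q ^ 2) ^ m)⁻¹ := by
    rw [← pow_add, _root_.zpow_neg, ← sq_zpow, zpow_natCast, add_right_comm]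
  rw [hparam] at h ⊢
  have hm := pow_ne_zero m hq
  have hi := pow_ne_zero (i + 1) (pow_ne_zero 2 hq)
  rw [show i + m + 2 = i + 1 + m + 1 by ring, pow_succ _ (i + 1 + m), pow_add _ (i + 1) m]
  rw [pow_right_comm q 2 m, pow_succ q m] at *
  field_simp at h ⊢
  linear_combination h

lemma IsUltra.laurentEval_neg_succ_inv_mul (hC : IsUltra C) (hq : q ≠ 0)
    (hq' : ¬IsOfFinOrder (q ^ 2)) (i m : ℕ) {z : ℂ} (hz : z ≠ 0) :
    ((q ^ 2) ^ (i + 1) - z ^ 2) *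
          laurentEval (C (q ^ 2) (q ^ (-(2 * ((i + m + 1 : ℕ) : ℤ)))) (m + 1)) (q⁻¹ * z) -
        q⁻¹ * ((q ^ 2) ^ (i + 1) - q ^ (-(2 * ((i + m + 1 : ℕ) : ℤ)))) * z *
          laurentEval (C (q ^ 2) (q ^ (-(2 * ((i + m + 1 : ℕ) : ℤ)))) m) (q⁻¹ * z) =
      (q ^ (m + 1))⁻¹ * ((q ^ 2) ^ (i + m + 2) - z ^ 2) *
        laurentEval (C (q ^ 2) (q ^ (-(2 * ((i + m + 1 : ℕ) : ℤ)))) (m + 1)) z := by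
  have h := hC.laurentEval_neg_succ_mul hq hq' i m (inv_ne_zero hz)
  have harg : q * z⁻¹ = (q⁻¹ * z)⁻¹ := by rw [mul_inv, inv_inv]
  rw [harg, laurentEval_inv, laurentEval_inv, laurentEval_inv] at h
  field_simp at h ⊢
  linear_combination -h

lemma pmTerm_self_qDiffRelated (hC : IsUltra C) (hq : q ≠ 0) (hq' : ¬IsOfFinOrder (q ^ 2))
    {L n j k : ℕ} (hk : k ≤ n + j) :
    QDiffRelated q (q ^ ((k : ℤ) - (n + j : ℕ))) (q ^ (n + j + k + 2)) (pmTerm q L C n k j k)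
      (pmTerm q L C n (k + 1) j k) := by
  obtain ⟨N, hN⟩ := Nat.exists_eq_add_of_le hk
  have hB (z : ℂ) (hz : z ≠ 0) := hC.qDifference_eq hq hq' (q ^ (2 * (k : ℤ) + 2)) N hz
  have hsum : 1 * ((q ^ N)⁻¹ + q ^ (2 * (k : ℤ) + 2) * q ^ N) =
      q ^ ((k : ℤ) - (n + j : ℕ)) + q ^ (n + j + k + 2) := by
    simp only [hN, ← zpow_natCast, ← _root_.zpow_neg, ← zpow_add₀ hq, one_mul]
    congr 2 <;> push_cast <;> ring
  have hprod := zpow_sub_mul_pow_add hq k (n + j)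
  rw [← zpow_two_mul_add_two] at hprod
  rw [pmTerm, pmTerm, if_pos le_rfl, if_neg k.lt_succ_self.not_ge, Nat.sub_self, hC.eq_one, hN,
    add_tsub_cancel_left, ← hN]
  simpa using QDiffRelated.C_mul_mul (c := pmCoeff q L n k j k) (c' := 0) (κ := 0) (A := 1)
    (A' := 0) hprod hsum (by simp) (by simp [laurentEval]) (by simp [laurentEval]) hB

lemma pmTerm_add_qDiffRelated (hC : IsUltra C) (hq : q ≠ 0) (hq' : ¬IsOfFinOrder (q ^ 2))
    {L n i j m : ℕ}
    (hk : i + m + 1 ≤ n + j) :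
    QDiffRelated q (q ^ ((i : ℤ) - (n + j : ℕ))) (q ^ (n + j + i + 2))
      (pmTerm q L C n i j (i + m + 1)) (pmTerm q L C n (i + 1) j (i + m + 1)) := by
  obtain ⟨N, hN⟩ := Nat.exists_eq_add_of_le hk
  have hB (z : ℂ) (hz : z ≠ 0) :=
    hC.qDifference_eq hq hq' (q ^ (2 * ((i + m + 1 : ℕ) : ℤ) + 2)) N hz
  have hsum : (q ^ (m + 1))⁻¹ * ((q ^ N)⁻¹ + q ^ (2 * ((i + m + 1 : ℕ) : ℤ) + 2) * q ^ N) =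
      q ^ ((i : ℤ) - (n + j : ℕ)) + q ^ (n + j + i + 2) := by
    simp only [hN, ← zpow_natCast, ← _root_.zpow_neg, ← zpow_add₀ hq, mul_add]
    congr 2 <;> push_cast <;> ring
  have hcoeff := pmCoeff_succ hq hq' L n i j (i + m + 1)
  rw [pmTerm, pmTerm, if_pos (by omega), if_pos (by omega), show i + m + 1 - i = m + 1 by omega,
    show i + m + 1 - (i + 1) = m by omega, hN, add_tsub_cancel_left, ← hN]
  rw [zpow_two_mul_add_two] at hB hsum ⊢
  refine QDiffRelated.C_mul_mul (zpow_sub_mul_pow_add hq i (n + j)) hsum ?_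
    (fun z hz => hC.laurentEval_neg_succ_mul hq hq' i m hz)
    (fun z hz => hC.laurentEval_neg_succ_inv_mul hq hq' i m hz) hB
  refine mul_right_cancel₀ hq ?_
  linear_combination hcoeff + pmCoeff q L n i j (i + m + 1) * ((q ^ 2) ^ (i + 1) -
    q ^ (-(2 * ((i + m + 1 : ℕ) : ℤ)))) * mul_inv_cancel₀ hq

lemma pmEntry_qDiffRelated (hC : IsUltra C) (hq : q ≠ 0) (hq' : ¬IsOfFinOrder (q ^ 2))
    (L n i j : ℕ) :
    QDiffRelated q (q ^ ((i : ℤ) - (n + j : ℕ))) (q ^ (n + j + i + 2)) (pmEntry q L C n i j)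
      (pmEntry q L C n (i + 1) j) :=
  QDiffRelated.sum fun k hk => by
    have hk' : k ≤ n + j := by
      have := mem_range.1 hk
      omega
    rcases lt_trichotomy k i with hki | rfl | hki
    · rw [pmTerm, pmTerm, if_neg hki.not_ge, if_neg (hki.trans i.lt_succ_self).not_ge]
      exact QDiffRelated.zero _ _ _
    · exact pmTerm_self_qDiffRelated hC hq hq' hk'
    · obtain ⟨m, rfl⟩ := Nat.exists_eq_add_of_lt hki
      exact pmTerm_add_qDiffRelated hC hq hq' hk'

end Entries

section LeadingCoefficients

variable {q : ℂ}

lemma qRacah_eq_racahFun (hq : q ≠ 0) (L n j k : ℕ) :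
    qRacah (q ^ 2) 1 1 (q ^ (-(2 * (n : ℤ) + 2 * (j : ℤ) + 2))) (q ^ (-(2 * (L : ℤ) + 2))) k j =
      racahFun (q ^ 2) L (n + j) j k := by
  have hL : q ^ (-(2 * (L : ℤ) + 2)) * q ^ 2 = (q ^ 2) ^ (-(L : ℤ)) := by
    rw [sq_zpow, ← zpow_natCast, ← zpow_add₀ hq]
    congr 1
    push_cast
    ring
  have hN : q ^ (-(2 * (n : ℤ) + 2 * (j : ℤ) + 2)) * q ^ 2 = (q ^ 2) ^ (-((n + j : ℕ) : ℤ)) := by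
    rw [sq_zpow, ← zpow_natCast, ← zpow_add₀ hq]
    congr 1
    push_cast
    ring
  have hLN : q ^ (-(2 * (n : ℤ) + 2 * (j : ℤ) + 2)) * q ^ (-(2 * (L : ℤ) + 2)) *
      (q ^ 2) ^ (j + 1) = (q ^ 2) ^ ((j : ℤ) - L - (n + j : ℕ) - 1) := by
    rw [sq_zpow, ← pow_mul, ← zpow_natCast, ← zpow_add₀ hq, ← zpow_add₀ hq]
    congr 1
    push_cast
    ring
  have hsub : range (min k j + 1) ⊆ range (j + 1) := range_subset_range.2 (by omega)
  rw [qRacah, racahFun]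
  simp only [one_mul, hL, hN, hLN]
  rw [← sum_subset hsub fun s hs hs' => ?_]
  · refine sum_congr rfl fun s _ => ?_
    rw [racahCoeff, racahBasis]
    ring
  · rw [racahBasis_eq_zero (pow_ne_zero 2 hq) (by simp only [mem_range] at hs hs'; omega),
      mul_zero]

lemma qp_neg_mul_qp_neg (hq : q ≠ 0) (hq' : ¬IsOfFinOrder (q ^ 2)) {L n j k : ℕ} (hL : k ≤ L)
    (hN : k ≤ n + j) :
    qp (q ^ (-(2 * (L : ℤ)))) (q ^ 2) k * qp (q ^ (-(2 * (j : ℤ) + 2 * (n : ℤ)))) (q ^ 2) k =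
      q ^ (2 * (k : ℤ) * (k - 1 - L - n - j)) *
        (qp (q ^ 2) (q ^ 2) L / qp (q ^ 2) (q ^ 2) (L - k) *
          (qp (q ^ 2) (q ^ 2) (n + j) / qp (q ^ 2) (q ^ 2) (n + j - k))) := by
  have hparamL : q ^ (-(2 * (L : ℤ))) = (q ^ 2) ^ (-(L : ℤ)) := by rw [sq_zpow, mul_neg]
  have hparamN : q ^ (-(2 * (j : ℤ) + 2 * (n : ℤ))) = (q ^ 2) ^ (-((n + j : ℕ) : ℤ)) := by
    rw [sq_zpow]
    congr 1
    push_cast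
    ring
  have hpow : (q ^ 2) ^ ((k.choose 2 : ℤ) - L * k) *
      (q ^ 2) ^ ((k.choose 2 : ℤ) - (n + j : ℕ) * k) = q ^ (2 * (k : ℤ) * (k - 1 - L - n - j)) := by
    rw [sq_zpow, sq_zpow, ← zpow_add₀ hq]
    congr 1
    push_cast
    linear_combination 2 * two_mul_cast_choose_two k
  have hsign : (-1 : ℂ) ^ k * (-1) ^ k = 1 := by rw [← mul_pow, neg_one_mul, neg_neg, one_pow]
  rw [hparamL, hparamN, qp_zpow_neg (pow_ne_zero 2 hq) hq' hL,
    qp_zpow_neg (pow_ne_zero 2 hq) hq' hN, ← hpow, mul_mul_mul_comm,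
    mul_mul_mul_comm ((-1) ^ k), hsign, one_mul]

lemma pmCoeff_eq (hq : q ≠ 0) (hq' : ¬IsOfFinOrder (q ^ 2)) {L n i j k : ℕ} (hL : k ≤ L)
    (hN : k ≤ n + j) :
    pmCoeff q L n i j k =
      (-1) ^ k * q ^ ((n : ℤ) + j - i + k ^ 2 + k - 2 * k * i) *
        (qp (q ^ 2) (q ^ 2) (k + i) / qp (q ^ 2) (q ^ 2) i) *
        (qp (q ^ 2) (q ^ 2) L * qp (q ^ 2) (q ^ 2) (L + 1) * qp (q ^ 2) (q ^ 2) (n + j) *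
          qp (q ^ 2) (q ^ 2) (n + j - k)) *
        (racahWeight (q ^ 2) L (n + j) k * racahFun (q ^ 2) L (n + j) j k) := by
  have hparamL : q ^ (2 * (L : ℤ) + 4) = (q ^ 2) ^ (L + 1 + 1) := by
    rw [← zpow_natCast, sq_zpow]
    congr 1
  have hparamk : q ^ (4 * (k : ℤ) + 4) = (q ^ 2) ^ (2 * k + 1 + 1) := by
    rw [← zpow_natCast, sq_zpow]
    congr 1
    push_cast
    ring
  rw [pmCoeff]
  generalize hE : q ^ ((n : ℤ) + (2 * (k : ℤ) + 1) * ((k : ℤ) - (i : ℤ)) +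
    (j : ℤ) * (2 * (k : ℤ) + 1) + 2 * (k : ℤ) * ((L : ℤ) + (n : ℤ) + 1) - (k : ℤ) ^ 2) = E
  have hpow : E * q ^ (2 * (k : ℤ) * (k - 1 - L - n - j)) =
      q ^ ((n : ℤ) + j - i + k ^ 2 + k - 2 * k * i) * (q ^ 2) ^ k ^ 2 := by
    rw [← hE, ← zpow_natCast, sq_zpow, ← zpow_add₀ hq, ← zpow_add₀ hq]
    congr 1
    push_cast
    ring
  rw [qRacah_eq_racahFun hq, qp_neg_mul_qp_neg hq hq' hL hN, hparamL, hparamk, qp_pow_succ hq',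
    qp_pow_succ hq', qp_self_succ _ (2 * k), racahWeight, show L + 1 + k = L + k + 1 by ring,
    show 2 * k + 1 + (n + j - k) = n + j + k + 1 by omega]
  have hF := qp_self_ne_zero hq'
  generalize qp (q ^ 2) (q ^ 2) = F at hF ⊢
  generalize q ^ (2 * (k : ℤ) * (k - 1 - L - n - j)) = A at hpow ⊢
  generalize q ^ ((n : ℤ) + j - i + k ^ 2 + k - 2 * k * i) = X at hpow ⊢
  field_simp [hF]
  linear_combination racahFun (q ^ 2) L (n + j) j k * (1 - (q ^ 2) ^ (2 * k + 1)) * hpow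

variable {C : ℂ → ℂ → ℕ → ℂ[X]}

lemma ultraCoeff_neg_sub (hq : q ≠ 0) (hq' : ¬IsOfFinOrder (q ^ 2)) {i k : ℕ} (hik : i ≤ k) :
    ultraCoeff (q ^ 2) (q ^ (-(2 * (k : ℤ)))) (k - i) =
      (-1) ^ (k - i) * q ^ (((k : ℤ) - i) * (k - i - 1) - 2 * k * (k - i)) *
        (qp (q ^ 2) (q ^ 2) k / (qp (q ^ 2) (q ^ 2) i * qp (q ^ 2) (q ^ 2) (k - i))) := by
  have hexp : 2 * (((k - i).choose 2 : ℤ) - k * (k - i : ℕ)) =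
      ((k : ℤ) - i) * (k - i - 1) - 2 * k * (k - i) := by
    have h := two_mul_cast_choose_two (k - i)
    push_cast [hik] at h ⊢
    linear_combination h
  have hparam : q ^ (-(2 * (k : ℤ))) = (q ^ 2) ^ (-(k : ℤ)) := by rw [sq_zpow, mul_neg]
  rw [ultraCoeff, hparam, qp_zpow_neg (pow_ne_zero 2 hq) hq' (Nat.sub_le k i), sq_zpow, hexp,
    Nat.sub_sub_self hik, mul_div_assoc, div_div]

lemma ultraCoeff_two_mul_add_two (hq' : ¬IsOfFinOrder (q ^ 2)) (k m : ℕ) :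
    ultraCoeff (q ^ 2) (q ^ (2 * (k : ℤ) + 2)) m =
      qp (q ^ 2) (q ^ 2) (k + m) / (qp (q ^ 2) (q ^ 2) k * qp (q ^ 2) (q ^ 2) m) := by
  rw [ultraCoeff, zpow_two_mul_add_two, qp_pow_succ hq', div_div]

lemma racahBasis_sq (hq : q ≠ 0) (hq' : ¬IsOfFinOrder (q ^ 2)) {i k : ℕ}
    (hik : i ≤ k) :
    racahBasis (q ^ 2) i k = (-1) ^ i * q ^ ((i : ℤ) * (i - 1) - 2 * k * i) *
      (qp (q ^ 2) (q ^ 2) (k + i) / qp (q ^ 2) (q ^ 2) (k - i)) := by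
  have hexp : 2 * ((i.choose 2 : ℤ) - k * i) = (i : ℤ) * (i - 1) - 2 * k * i := by
    linear_combination two_mul_cast_choose_two i
  rw [racahBasis, qp_zpow_neg (pow_ne_zero 2 hq) hq' hik, qp_pow_succ hq', sq_zpow, hexp]
  have := qp_self_ne_zero hq' k
  field_simp

lemma pmCoeff_mul_ultraCoeff (hq : q ≠ 0) (hq' : ¬IsOfFinOrder (q ^ 2))
    {L n i j k : ℕ} (hik : i ≤ k) (hL : k ≤ L) (hN : k ≤ n + j) :
    pmCoeff q L n i j k * (ultraCoeff (q ^ 2) (q ^ (-(2 * (k : ℤ)))) (k - i) *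
        ultraCoeff (q ^ 2) (q ^ (2 * (k : ℤ) + 2)) (n + j - k)) =
      q ^ (n + j + i) * (qp (q ^ 2) (q ^ 2) L * qp (q ^ 2) (q ^ 2) (L + 1) *
          qp (q ^ 2) (q ^ 2) (n + j) ^ 2 / qp (q ^ 2) (q ^ 2) i ^ 2) *
        (racahWeight (q ^ 2) L (n + j) k * racahFun (q ^ 2) L (n + j) j k *
          racahBasis (q ^ 2) i k) := by
  have hpow : q ^ ((n : ℤ) + j - i + k ^ 2 + k - 2 * k * i) *
      q ^ (((k : ℤ) - i) * (k - i - 1) - 2 * k * (k - i)) =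
      q ^ (n + j + i) * q ^ ((i : ℤ) * (i - 1) - 2 * k * i) := by
    rw [← zpow_natCast q (n + j + i), ← zpow_add₀ hq, ← zpow_add₀ hq]
    congr 1
    push_cast
    ring
  have hsign : (-1 : ℂ) ^ k * (-1) ^ (k - i) = (-1) ^ i := by
    obtain ⟨d, rfl⟩ := Nat.exists_eq_add_of_le hik
    rw [Nat.add_sub_cancel_left, pow_add, mul_assoc, ← mul_pow, neg_one_mul, neg_neg, one_pow,
      mul_one]
  rw [pmCoeff_eq hq hq' hL hN, ultraCoeff_neg_sub hq hq' hik, ultraCoeff_two_mul_add_two hq',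
    racahBasis_sq hq hq' hik, ← hsign, Nat.add_sub_cancel' hN]
  have hF := qp_self_ne_zero hq'
  generalize qp (q ^ 2) (q ^ 2) = F at hF ⊢
  generalize q ^ ((n : ℤ) + j - i + k ^ 2 + k - 2 * k * i) = A at hpow ⊢
  generalize q ^ (((k : ℤ) - i) * (k - i - 1) - 2 * k * (k - i)) = B at hpow ⊢
  generalize q ^ ((i : ℤ) * (i - 1) - 2 * k * i) = X at hpow ⊢
  field_simp [hF]
  linear_combination racahWeight (q ^ 2) L (n + j) k * racahFun (q ^ 2) L (n + j) j k * hpow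

lemma pmEntry_coeff_top (hC : IsUltra C) (hq : q ≠ 0) (hq' : ¬IsOfFinOrder (q ^ 2))
    (L n : ℕ) {i j : ℕ} (hi : i ≤ n + j) :
    (pmEntry q L C n i j).coeff (n + j - i) =
      2 ^ (n + j - i) * q ^ (n + j + i) * (qp (q ^ 2) (q ^ 2) L * qp (q ^ 2) (q ^ 2) (L + 1) *
          qp (q ^ 2) (q ^ 2) (n + j) ^ 2 / qp (q ^ 2) (q ^ 2) i ^ 2) *
        racahMoment (q ^ 2) L (n + j) j i := by
  rw [pmEntry, finsetSum_coeff, racahMoment, mul_sum]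
  refine sum_congr rfl fun k hk => ?_
  rw [mem_range, Nat.lt_succ_iff, le_min_iff] at hk
  rw [pmTerm]
  split_ifs with hik
  · rw [coeff_C_mul, show n + j - i = (k - i) + (n + j - k) by omega,
      coeff_mul_add_eq_of_natDegree_le (hC.natDegree_le _ _ _) (hC.natDegree_le _ _ _),
      hC.coeff_self, hC.coeff_self, pow_add]
    linear_combination 2 ^ (k - i) * 2 ^ (n + j - k) *
      pmCoeff_mul_ultraCoeff hq hq' hik hk.1 hk.2
  · rw [racahBasis_eq_zero (pow_ne_zero 2 hq) (not_le.1 hik), mul_zero, mul_zero, coeff_zero]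

end LeadingCoefficients

section CoefficientsOfEntries

variable {q : ℂ} {C : ℂ → ℂ → ℕ → ℂ[X]}

lemma pmEntry_coeff_eq_zero_of_lt_add (hC : IsUltra C) (L : ℕ) {n i j e : ℕ}
    (h : n + j < e + i) : (pmEntry q L C n i j).coeff e = 0 := by
  rw [pmEntry, finsetSum_coeff]
  refine sum_eq_zero fun k hk => ?_
  rw [pmTerm]
  split_ifs with hik
  · have hdeg := natDegree_mul_le_of_le (hC.natDegree_le (q ^ 2) (q ^ (-(2 * (k : ℤ)))) (k - i))
      (hC.natDegree_le (q ^ 2) (q ^ (2 * (k : ℤ) + 2)) (n + j - k))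
    rw [coeff_C_mul, coeff_eq_zero_of_natDegree_lt (hdeg.trans_lt ?_), mul_zero]
    rw [mem_range] at hk
    omega
  · exact coeff_zero e

lemma natDegree_pmEntry_le (hC : IsUltra C) (L n i j : ℕ) :
    (pmEntry q L C n i j).natDegree ≤ n + j - i :=
  natDegree_le_iff_coeff_eq_zero.2 fun e he =>
    pmEntry_coeff_eq_zero_of_lt_add hC L (by omega)

-- At the top degree `n + j - i` the coefficient is an orthogonal moment; below it the row
-- relation would force the next row to have larger degree.
lemma pmEntry_coeff_eq_zero_of_add_lt (hC : IsUltra C) (hq : q ≠ 0) (hq' : ¬IsOfFinOrder q)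
    {L i j : ℕ} (hj : j ≤ L) (hij : i ≤ j) (n : ℕ) {e : ℕ} (he : n + i < e + j) :
    (pmEntry q L C n i j).coeff e = 0 := by
  have hsq : ¬IsOfFinOrder (q ^ 2) := by simpa [isOfFinOrder_pow] using hq'
  induction hij using Nat.decreasingInduction generalizing e with
  | self => exact pmEntry_coeff_eq_zero_of_lt_add hC L (by omega)
  | of_succ i hij ih =>
    by_contra hcoeff
    have hf : pmEntry q L C n i j ≠ 0 := by
      intro hzero
      rw [hzero, coeff_zero] at hcoeff
      exact hcoeff rfl
    have hle := le_natDegree_of_ne_zero hcoeff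
    have hlead := leadingCoeff_ne_zero.2 hf
    rw [leadingCoeff] at hlead
    rcases (natDegree_pmEntry_le (q := q) hC L n i j).eq_or_lt with htop | hlt
    · rw [htop, pmEntry_coeff_top hC hq hsq L n (by omega),
        racahMoment_eq_zero (pow_ne_zero 2 hq) hsq hj (Nat.le_add_left j n) hij, mul_zero] at hlead
      exact hlead rfl
    · have hdeg := (pmEntry_qDiffRelated hC hq hsq L n i j).degree_lt hq hf
        (one_sub_mul_pow_ne_zero hq hq' (by omega))
        (by rw [← pow_add]; exact one_sub_pow_ne_zero hq' (by omega))
      have hg := ne_zero_of_degree_gt hdeg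
      exact leadingCoeff_ne_zero.2 hg (ih (by have := natDegree_lt_natDegree hf hdeg; omega))

/-- The diagonal entry of `Γ_n` in row `i`, for an arbitrary natural number `i`. -/
def gammaEntry (q : ℂ) (L n i : ℕ) : ℂ :=
  2 ^ n * q ^ n * qp (q ^ (2 * (i : ℤ) + 2)) (q ^ 2) n *
      qp (q ^ (2 * (L : ℤ) - 2 * (i : ℤ) + 2)) (q ^ 2) n /
    (qp (q ^ 2) (q ^ 2) n * qp (q ^ (2 * (L : ℤ) + 4)) (q ^ 2) n)

lemma gammaEntry_eq (hq' : ¬IsOfFinOrder (q ^ 2)) {L i : ℕ} (hi : i ≤ L) (n : ℕ) :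
    gammaEntry q L n i =
      2 ^ n * q ^ n * (qp (q ^ 2) (q ^ 2) (i + n) / qp (q ^ 2) (q ^ 2) i) *
          (qp (q ^ 2) (q ^ 2) (L - i + n) / qp (q ^ 2) (q ^ 2) (L - i)) /
        (qp (q ^ 2) (q ^ 2) n * (qp (q ^ 2) (q ^ 2) (L + 1 + n) / qp (q ^ 2) (q ^ 2) (L + 1))) := by
  have hsub : 2 * (L : ℤ) - 2 * (i : ℤ) + 2 = 2 * ((L - i : ℕ) : ℤ) + 2 := by
    push_cast [hi]
    ring
  have hadd : 2 * (L : ℤ) + 4 = 2 * ((L + 1 : ℕ) : ℤ) + 2 := by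
    push_cast
    ring
  rw [gammaEntry, hsub, hadd, zpow_two_mul_add_two, zpow_two_mul_add_two, zpow_two_mul_add_two,
    qp_pow_succ hq', qp_pow_succ hq', qp_pow_succ hq']

lemma gammaEntry_ne_zero (hq : q ≠ 0) (hq' : ¬IsOfFinOrder (q ^ 2)) {L i : ℕ} (hi : i ≤ L)
    (n : ℕ) : gammaEntry q L n i ≠ 0 := by
  have hF := qp_self_ne_zero hq'
  rw [gammaEntry_eq hq' hi]
  simp only [ne_eq, div_eq_zero_iff, mul_eq_zero, pow_eq_zero_iff', hF, hq, two_ne_zero,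
    false_and, or_self, not_false_eq_true]

lemma pmEntry_self_coeff (hC : IsUltra C) (hq : q ≠ 0) (hq' : ¬IsOfFinOrder (q ^ 2)) {L j : ℕ}
    (hj : j ≤ L) (n : ℕ) : (pmEntry q L C n j j).coeff n = gammaEntry q L n j := by
  have htop := pmEntry_coeff_top hC hq hq' L n (Nat.le_add_left j n)
  have hmoment := racahMoment_eq (d := 0) (pow_ne_zero 2 hq) hq' hj (Nat.le_add_left j n)
  have hpow : q ^ (n + j + j) = q ^ n * (q ^ 2) ^ j := by ring
  rw [Nat.add_zero, show L + (n + j) - j - j = L - j + n by omega,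
    show L + (n + j) + 1 - j = L + 1 + n by omega, Nat.add_sub_cancel] at hmoment
  rw [Nat.add_sub_cancel, hmoment, hpow] at htop
  rw [htop, gammaEntry_eq hq' hj, Nat.add_comm j n, qp_zero]
  have hF := qp_self_ne_zero hq'
  generalize qp (q ^ 2) (q ^ 2) = F at hF ⊢
  field_simp [hF]
  simp

lemma pmEntry_succ_right_coeff (hC : IsUltra C) (hq : q ≠ 0) (hq' : ¬IsOfFinOrder q) {L i : ℕ}
    (hi : i + 1 ≤ L) (m : ℕ) :
    (pmEntry q L C (m + 1) i (i + 1)).coeff m =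
      -(q / 2 * ((1 - q ^ (2 * (m + 1))) * (1 - q ^ (2 * i + 2))) /
        ((1 - q ^ 2) * (1 - q ^ (2 * (m + 1) + 2 * i + 2)))) *
        gammaEntry q L (m + 1) (i + 1) := by
  have hsq : ¬IsOfFinOrder (q ^ 2) := by simpa [isOfFinOrder_pow] using hq'
  have hf : (pmEntry q L C (m + 1) i (i + 1)).natDegree ≤ m :=
    natDegree_le_iff_coeff_eq_zero.2 fun e he =>
      pmEntry_coeff_eq_zero_of_add_lt hC hq hq' hi i.le_succ (m + 1) (by omega)
  have hg := natDegree_pmEntry_le (q := q) hC L (m + 1) (i + 1) (i + 1)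
  rw [Nat.add_sub_cancel] at hg
  have hcoeff := (pmEntry_qDiffRelated hC hq hsq L (m + 1) i (i + 1)).coeff_eq hq hf hg
  have ha : q ^ ((i : ℤ) - (m + 1 + (i + 1) : ℕ)) * q ^ m = (q ^ 2)⁻¹ := by
    rw [← zpow_natCast, ← zpow_natCast, ← zpow_add₀ hq, ← _root_.zpow_neg]
    congr 1
    push_cast
    ring
  rw [pmEntry_self_coeff hC hq hsq hi, zpow_sub_mul_pow_add hq, ha] at hcoeff
  have hone : 1 - q ^ 2 ≠ 0 := one_sub_pow_ne_zero hq' two_ne_zero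
  have htwo : 1 - q ^ (2 * (m + 1) + 2 * i + 2) ≠ 0 := one_sub_pow_ne_zero hq' (by omega)
  field_simp at hcoeff ⊢
  linear_combination -hcoeff

lemma pmEntry_succ_left_coeff (hC : IsUltra C) (hq : q ≠ 0) (hq' : ¬IsOfFinOrder (q ^ 2))
    (j l m : ℕ) :
    (pmEntry q (j + l + 1) C (m + 1) (j + 1) j).coeff m =
      -(q / 2 * ((1 - q ^ (2 * (m + 1))) * (1 - q ^ (2 * (l + 1)))) /
        ((1 - q ^ 2) * (1 - q ^ (2 * (l + m + 2))))) * gammaEntry q (j + l + 1) (m + 1) j := by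
  have hsub := pmEntry_coeff_top hC hq hq' (j + l + 1) (m + 1) (i := j + 1) (j := j) (by omega)
  have hdiag := pmEntry_coeff_top hC hq hq' (j + l + 1) (m + 1) (i := j) (j := j) (by omega)
  have hmoment := racahMoment_pred (pow_ne_zero 2 hq) hq' j 0 l m
  rw [show m + 1 + j - (j + 1) = m by omega] at hsub
  rw [show m + 1 + j - j = m + 1 by omega, pmEntry_self_coeff hC hq hq' (by omega)] at hdiag
  rw [hsub, hdiag, show m + 1 + j = j + m + 1 by ring, qp_self_succ _ j]
  simp only [add_zero, zero_add, pow_zero, pow_one, one_mul] at hmoment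
  have hone : 1 - q ^ 2 ≠ 0 := by simpa using one_sub_pow_ne_zero hq' one_ne_zero
  have htwo := one_sub_pow_ne_zero hq' (show l + m + 2 ≠ 0 by omega)
  have hj := one_sub_pow_ne_zero hq' (show j + 1 ≠ 0 by omega)
  have hF := qp_self_ne_zero hq' j
  have hpow : q ^ (j + m + 1 + (j + 1)) = q * q ^ (j + m + 1 + j) := by ring
  simp only [pow_mul q 2, hpow, pow_succ (2 : ℂ) m]
  field_simp
  linear_combination qp (q ^ 2) (q ^ 2) (j + l + 1) * qp (q ^ 2) (q ^ 2) (j + l + 1 + 1) *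
    qp (q ^ 2) (q ^ 2) (j + m + 1) ^ 2 * hmoment

lemma pmEntry_self_comp_neg_X (hC : IsUltra C) (L n j : ℕ) :
    (pmEntry q L C n j j).comp (-X) = Polynomial.C ((-1) ^ n) * pmEntry q L C n j j := by
  rw [pmEntry, Polynomial.sum_comp, mul_sum]
  refine sum_congr rfl fun k hk => ?_
  rw [pmTerm]
  split_ifs with hjk
  · have hsign : (-1 : ℂ) ^ n = (-1) ^ (k - j) * (-1) ^ (n + j - k) := by
      rw [mem_range] at hk
      rw [← pow_add]
      congr 1
      omega
    rw [mul_comp, mul_comp, hC.comp_neg_X, hC.comp_neg_X, C_comp, hsign, Polynomial.C_mul]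
    ring
  · rw [zero_comp, mul_zero]

lemma coeff_eq_zero_of_comp_neg_X {R : Type*} [CommRing R] [NoZeroDivisors R] [CharZero R]
    {f : R[X]} {m : ℕ} (hf : f.comp (-X) = Polynomial.C ((-1) ^ (m + 1)) * f) : f.coeff m = 0 := by
  have hcoeff := congrArg (fun g => g.coeff m) hf
  simp only [show (-X : R[X]) = Polynomial.C (-1) * X by simp, comp_C_mul_X_coeff,
    coeff_C_mul] at hcoeff
  have hsign : (-1 : R) ^ m ≠ 0 := pow_ne_zero m (neg_ne_zero.2 one_ne_zero)
  refine (mul_eq_zero.1 (?_ : 2 * (-1) ^ m * f.coeff m = 0)).resolve_left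
    (mul_ne_zero two_ne_zero hsign)
  linear_combination hcoeff

end CoefficientsOfEntries

lemma Gam_inv {q : ℂ} (hq : q ≠ 0) (hq' : ¬IsOfFinOrder (q ^ 2)) (L n : ℕ) :
    (Gam q L n)⁻¹ = Matrix.diagonal fun i : Fin (L + 1) => (gammaEntry q L n i)⁻¹ := by
  refine Matrix.inv_eq_right_inv ?_
  rw [Gam, Matrix.diagonal_mul_diagonal, ← Matrix.diagonal_one]
  congr 1
  funext i
  exact mul_inv_cancel₀ (gammaEntry_ne_zero hq hq' (Nat.lt_succ_iff.1 i.2) n)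

theorem stmt14_general (q : ℂ) (hq : q ≠ 0) (hq' : ¬IsOfFinOrder q) (L : ℕ)
    (C : ℂ → ℂ → ℕ → Polynomial ℂ) (hC : IsUltra C) (n : ℕ) (hn : 1 ≤ n) (i j : Fin (L + 1)) :
    ((Pm q L C n * ((Gam q L n)⁻¹).map Polynomial.C) i j).coeff (n - 1) =
      if (j : ℕ) = (i : ℕ) + 1 then
        -(q / 2 * ((1 - q ^ (2 * n)) * (1 - q ^ (2 * (i : ℕ) + 2))) /
          ((1 - q ^ 2) * (1 - q ^ (2 * n + 2 * (i : ℕ) + 2))))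
      else if (i : ℕ) = (j : ℕ) + 1 then
        -(q / 2 * ((1 - q ^ (2 * n)) * (1 - q ^ (2 * (L : ℤ) - 2 * ((i : ℕ) : ℤ) + 2))) /
          ((1 - q ^ 2) * (1 - q ^ (2 * (L : ℤ) - 2 * ((i : ℕ) : ℤ) + 2 * (n : ℤ) + 2))))
      else 0 := by
  have hsq : ¬IsOfFinOrder (q ^ 2) := by simpa [isOfFinOrder_pow] using hq'
  obtain ⟨m, rfl⟩ := Nat.exists_eq_add_of_le' hn
  obtain ⟨i, hi⟩ := i
  obtain ⟨j, hj⟩ := j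
  rw [Gam_inv hq hsq, Matrix.diagonal_map (map_zero _), Matrix.mul_diagonal, Pm_apply,
    coeff_mul_C, ← div_eq_mul_inv, Nat.add_sub_cancel,
    div_eq_iff (gammaEntry_ne_zero hq hsq (Nat.lt_succ_iff.1 hj) _)]
  dsimp only
  split_ifs with hsuper hsub
  · subst hsuper
    exact pmEntry_succ_right_coeff hC hq hq' (Nat.lt_succ_iff.1 hj) m
  · subst hsub
    obtain ⟨l, rfl⟩ : ∃ l, L = j + l + 1 := ⟨L - (j + 1), by omega⟩
    rw [pmEntry_succ_left_coeff hC hq hsq]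
    simp only [← zpow_natCast]
    congr 8 <;> push_cast <;> ring
  · rw [zero_mul]
    rcases lt_trichotomy i j with hij | rfl | hij
    · exact pmEntry_coeff_eq_zero_of_add_lt hC hq hq' (Nat.lt_succ_iff.1 hj) hij.le _ (by omega)
    · exact coeff_eq_zero_of_comp_neg_X (pmEntry_self_comp_neg_X hC L (m + 1) i)
    · exact pmEntry_coeff_eq_zero_of_lt_add hC L (by omega)

lemma not_isOfFinOrder_ofReal {q : ℝ} (hq0 : 0 < q) (hq1 : q < 1) :
    ¬IsOfFinOrder (q : ℂ) := fun h => by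
  have hnorm := h.norm_eq_one
  rw [Complex.norm_of_nonneg hq0.le] at hnorm
  exact hq1.ne hnorm

/-- the coefficient of `x^{n-1}` in the monic polynomial
`Q_n(x) = P_n(x) Γ_n⁻¹` has the stated tridiagonal form (nonzero only on the sub- and
superdiagonal). -/
theorem stmt14 (q : ℝ) (hq0 : 0 < q) (hq1 : q < 1) (L : ℕ)
    (C : ℂ → ℂ → ℕ → Polynomial ℂ) (hC : IsUltra C) (n : ℕ) (hn : 1 ≤ n) :
    ∀ i j : Fin (L + 1),
      ((Pm (q : ℂ) L C n * ((Gam (q : ℂ) L n)⁻¹).map Polynomial.C) i j).coeff (n - 1) =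
        if (j : ℕ) = (i : ℕ) + 1 then
          -((q : ℂ) / 2 * ((1 - (q : ℂ) ^ (2 * n)) * (1 - (q : ℂ) ^ (2 * (i : ℕ) + 2))) /
            ((1 - (q : ℂ) ^ 2) * (1 - (q : ℂ) ^ (2 * n + 2 * (i : ℕ) + 2))))
        else if (i : ℕ) = (j : ℕ) + 1 then
          -((q : ℂ) / 2 *
              ((1 - (q : ℂ) ^ (2 * n)) *
                (1 - (q : ℂ) ^ (2 * (L : ℤ) - 2 * ((i : ℕ) : ℤ) + 2))) /
            ((1 - (q : ℂ) ^ 2) *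
              (1 - (q : ℂ) ^ (2 * (L : ℤ) - 2 * ((i : ℕ) : ℤ) + 2 * (n : ℤ) + 2))))
        else 0 :=
  stmt14_general q (Complex.ofReal_ne_zero.2 hq0.ne') (not_isOfFinOrder_ofReal hq0 hq1) L C hC n hn

end
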